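/- arXiv:math/9904118 — 2 statements merged into one kernel-verified Lean document; each statement's English description precedes it below -/
import Mathlib

section
/- Let h be a CR function on M of class C¹ and let Γ ⊆ ℝᵈ be an open convex cone. Suppose h extends continuously to a holomorphic function in the wedge W_Γ and also extends continuously to a holomorphic function in the wedge W_{−Γ}. Then h extends holomorphically to a full neighborhood of the origin: there exist a neighborhood U of 0 in ℂᴺ and a holomorphic function G : U → ℂ with G(ι(z,s)) = h(z,s) for all (z,s) near 0. -/
open Complex Topology Filter

noncomputable section

/-- The local model for the generic submanifold `M`: a neighborhood of `0` in `ℂⁿ × ℝᵈ`. -/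
abbrev Dom (n d : ℕ) : Type := (Fin n → ℂ) × (Fin d → ℝ)

/-- The ambient space `ℂᴺ = ℂⁿ × ℂᵈ`. -/
abbrev Amb (n d : ℕ) : Type := (Fin n → ℂ) × (Fin d → ℂ)

/-- The Wirtinger derivative `∂/∂z̄ⱼ` of a function on `ℂⁿ × ℝᵈ`. -/
def dzbar {n d : ℕ} (j : Fin n) (f : Dom n d → ℂ) (p : Dom n d) : ℂ :=
  (1 / 2 : ℂ) * (fderiv ℝ f p (Pi.single j 1, 0) +
    Complex.I * fderiv ℝ f p (Pi.single j Complex.I, 0))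

/-- The derivative `∂/∂sₖ` of a function on `ℂⁿ × ℝᵈ`. -/
def dS {n d : ℕ} (k : Fin d) (f : Dom n d → ℂ) (p : Dom n d) : ℂ :=
  fderiv ℝ f p (0, Pi.single k 1)

/-- The matrix `I_d + i φ_s`. -/
def phiMat {n d : ℕ} (φ : Dom n d → Fin d → ℝ) (p : Dom n d) :
    Matrix (Fin d) (Fin d) ℂ := fun k l =>
  (if k = l then 1 else 0) + Complex.I * ((fderiv ℝ φ p (0, Pi.single l 1)) k : ℂ)

/-- The CR vector field `Λⱼ = ∂/∂z̄ⱼ − i (φ_{z̄ⱼ})ᵀ (I_d + iφ_s)⁻¹ ∂/∂s` of `M`. -/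
def Lambda {n d : ℕ} (φ : Dom n d → Fin d → ℝ) (j : Fin n) (f : Dom n d → ℂ)
    (p : Dom n d) : ℂ :=
  dzbar j f p - Complex.I *
    ∑ l, (∑ k, dzbar j (fun q => ((φ q k : ℝ) : ℂ)) p * (phiMat φ p)⁻¹ k l) * dS l f p

/-- `Λ^α = Λ₁^{α₁} ⋯ Λₙ^{αₙ}`. -/
def LambdaPow {n d : ℕ} (φ : Dom n d → Fin d → ℝ) (α : Fin n → ℕ)
    (f : Dom n d → ℂ) : Dom n d → ℂ :=
  (((List.finRange n).map fun j => (Lambda φ j)^[α j]).foldr (· ∘ ·) id) f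

/-- The Wirtinger (complex) gradient component `∂r/∂Z'ₘ` of a real-valued function on `ℂ^{N'}`. -/
def gradZ {N' : ℕ} (m : Fin N') (r : (Fin N' → ℂ) → ℝ) (Z : Fin N' → ℂ) : ℂ :=
  (1 / 2 : ℂ) * ((fderiv ℝ r Z (Pi.single m 1) : ℂ) -
    Complex.I * (fderiv ℝ r Z (Pi.single m Complex.I) : ℂ))

/-- The space `E_k(0)` spanned by the vectors `Λ^α (ρ'_{l Z'}(H, H̄))(0)`, `|α| ≤ k`. -/
def Ek {n d N' d' : ℕ} (φ : Dom n d → Fin d → ℝ) (ρ : Fin d' → (Fin N' → ℂ) → ℝ)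
    (H : Dom n d → Fin N' → ℂ) (k : ℕ) : Submodule ℂ (Fin N' → ℂ) :=
  Submodule.span ℂ { v | ∃ (α : Fin n → ℕ) (l : Fin d'), (∑ j, α j) ≤ k ∧
    v = fun m => LambdaPow φ α (fun p => gradZ m (ρ l) (H p)) 0 }

/-- The identification `ι(z,s) = (z, s + iφ(z,z̄,s))` of `ℂⁿ × ℝᵈ` with `M ⊆ ℂᴺ`. -/
def iotaM {n d : ℕ} (φ : Dom n d → Fin d → ℝ) (p : Dom n d) : Amb n d :=
  (p.1, fun k => (p.2 k : ℂ) + Complex.I * ((φ p k : ℝ) : ℂ))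

/-- The map `Ψ(z,s,t) = (z, s + it + iφ̂(z,z̄,s+it))`. -/
def PsiW {n d : ℕ} (φhat : Amb n d → Fin d → ℂ)
    (q : (Fin n → ℂ) × (Fin d → ℝ) × (Fin d → ℝ)) : Amb n d :=
  (q.1, fun k => (q.2.1 k : ℂ) + Complex.I * (q.2.2 k : ℂ) +
    Complex.I * φhat (q.1, fun k' => (q.2.1 k' : ℂ) + Complex.I * (q.2.2 k' : ℂ)) k)

/-- The wedge `W_Γ^ε` in the coordinates `(z,s,t)`. -/
def WedgeSet {n d : ℕ} (Γ : Set (Fin d → ℝ)) (ε : ℝ) :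
    Set ((Fin n → ℂ) × (Fin d → ℝ) × (Fin d → ℝ)) :=
  {q | ‖q.1‖ < ε ∧ ‖q.2.1‖ < ε ∧ ‖q.2.2‖ < ε ∧ q.2.2 ∈ Γ}

/-- `h` extends continuously to a holomorphic function in the wedge `W_Γ`. -/
def ExtendsToWedge {n d : ℕ} (φ : Dom n d → Fin d → ℝ) (φhat : Amb n d → Fin d → ℂ)
    (Γ : Set (Fin d → ℝ)) (h : Dom n d → ℂ) : Prop :=
  ∃ ε > (0 : ℝ), ∃ F : Amb n d → ℂ,
    DifferentiableOn ℂ F (PsiW φhat '' WedgeSet Γ ε) ∧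
    ContinuousOn F (PsiW φhat '' WedgeSet Γ ε ∪
      iotaM φ '' {p : Dom n d | ‖p.1‖ < ε ∧ ‖p.2‖ < ε}) ∧
    ∀ p : Dom n d, ‖p.1‖ < ε → ‖p.2‖ < ε → F (iotaM φ p) = h p

/-!
For fixed `z`, the wedge extensions pulled back by `w ↦ w + iφ̂(z,z̄,w)` live on opposite tubes
`ℝᵈ ± iΓ` with the common edge `ℝᵈ`. The classical edge-of-the-wedge theorem glues them on a ball
whose radius does not depend on `z`: a linear change of variables puts an orthant inside `Γ`, and
for orthants the extension is the average of the data over the boundaries of Rudin's analytic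
discs. Since `φ̂` vanishes to second order, `w ↦ w + iφ̂(z,z̄,w)` is inverted on a ball, again of
radius independent of `z`. The resulting function `G` is holomorphic in the last variables and
bounded, and near a base point inside the wedge it is the given extension, hence jointly
holomorphic there; a Hartogs argument on the Taylor coefficients in the last variables carries the
joint holomorphy to a neighborhood of the origin.
-/

open MeasureTheory Metric Set

section ParametricIntegral

variable {E F α : Type*} [NormedAddCommGroup E] [NormedAddCommGroup F] [MeasurableSpace α]
  {μ : Measure α} {f : E → α → F}

lemma aestronglyMeasurable_fderiv_apply {𝕜 : Type*} [RCLike 𝕜] [NormedSpace 𝕜 E]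
    [NormedSpace 𝕜 F] {x : E} (hmeas : ∀ᶠ y in 𝓝 x, AEStronglyMeasurable (f y) μ)
    (hdiff : ∀ᵐ a ∂μ, DifferentiableAt 𝕜 (f · a) x) (v : E) :
    AEStronglyMeasurable (fun a => fderiv 𝕜 (f · a) x v) μ := by
  have hlim : Tendsto (fun k : ℕ => x + (k : 𝕜)⁻¹ • v) atTop (𝓝 x) := by
    simpa using (tendsto_inv_atTop_nhds_zero_nat (𝕜 := 𝕜)).smul_const v |>.const_add x
  obtain ⟨N, hN⟩ := eventually_atTop.1 (hlim.eventually hmeas)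
  refine aestronglyMeasurable_of_tendsto_ae (u := atTop)
    (f := fun (k : ℕ) a => ((k + N : ℕ) : 𝕜) • (f (x + ((k + N : ℕ) : 𝕜)⁻¹ • v) a - f x a))
    (fun k => ((hN _ (Nat.le_add_left N k)).sub hmeas.self_of_nhds).const_smul _) ?_
  filter_upwards [hdiff] with a ha
  refine ha.hasFDerivAt.lim v ?_
  simpa only [RCLike.norm_natCast, Function.comp_def] using
    tendsto_natCast_atTop_atTop.comp (tendsto_add_atTop_nat N)

lemma aestronglyMeasurable_fderiv {𝕜 : Type*} [RCLike 𝕜] [NormedSpace 𝕜 E]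
    [NormedSpace 𝕜 F] [FiniteDimensional 𝕜 E] {x : E}
    (hmeas : ∀ᶠ y in 𝓝 x, AEStronglyMeasurable (f y) μ)
    (hdiff : ∀ᵐ a ∂μ, DifferentiableAt 𝕜 (f · a) x) :
    AEStronglyMeasurable (fun a => fderiv 𝕜 (f · a) x) μ := by
  let b := Module.finBasis 𝕜 E
  have hsum : (fun a => fderiv 𝕜 (f · a) x) = fun a => ∑ i,
      ContinuousLinearMap.smulRightL 𝕜 E F (b.coord i).toContinuousLinearMap
        (fderiv 𝕜 (f · a) x (b i)) := by
    funext a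
    ext v
    conv_lhs => rw [← b.sum_repr v, map_sum]
    simp
  rw [hsum]
  exact Finset.aestronglyMeasurable_fun_sum _ fun i _ =>
    (ContinuousLinearMap.continuous _).comp_aestronglyMeasurable
      (aestronglyMeasurable_fderiv_apply hmeas hdiff (b i))

variable [NormedSpace ℂ E] [NormedSpace ℂ F]

lemma norm_fderiv_le_of_forall_norm_le {u : E → F} {x : E} {r C : ℝ} (hr : 0 < r)
    (hd : DifferentiableOn ℂ u (ball x r)) (hC : ∀ y ∈ ball x r, ‖u y‖ ≤ C) :
    ‖fderiv ℂ u x‖ ≤ 2 * C / r := by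
  refine Complex.norm_fderiv_le_div_of_mapsTo_ball hd (fun y hy => ?_) hr
  rw [mem_closedBall, dist_eq_norm]
  linarith [norm_sub_le (u y) (u x), hC y hy, hC x (mem_ball_self hr)]

theorem differentiableOn_integral_of_dominated [FiniteDimensional ℂ E] {U : Set E}
    (hU : IsOpen U) {g : α → ℝ} (hmeas : ∀ x ∈ U, AEStronglyMeasurable (f x) μ)
    (hdiff : ∀ᵐ a ∂μ, DifferentiableOn ℂ (f · a) U) (hg : Integrable g μ)
    (hbound : ∀ᵐ a ∂μ, ∀ x ∈ U, ‖f x a‖ ≤ g a) :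
    DifferentiableOn ℂ (fun x => ∫ a, f x a ∂μ) U := by
  intro x hx
  obtain ⟨r, hr, hrU⟩ := Metric.isOpen_iff.1 hU x hx
  have hball : ∀ y ∈ ball x (r / 2), ball y (r / 2) ⊆ U := fun y hy =>
    (ball_subset_ball' (by linarith [mem_ball.1 hy])).trans hrU
  have hself : ∀ y ∈ ball x (r / 2), y ∈ U := fun y hy => hball y hy (mem_ball_self (half_pos hr))
  have hderiv : ∀ᵐ a ∂μ, ∀ y ∈ ball x (r / 2), HasFDerivAt (f · a) (fderiv ℂ (f · a) y) y := by
    filter_upwards [hdiff] with a ha y hy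
    exact (ha.differentiableAt (hU.mem_nhds (hself y hy))).hasFDerivAt
  refine (hasFDerivAt_integral_of_dominated_of_fderiv_le (𝕜 := ℂ)
    (bound := fun a => 2 * g a / (r / 2)) (ball_mem_nhds x (half_pos hr)) ?_ ?_ ?_ ?_ ?_
    hderiv).differentiableAt.differentiableWithinAt
  · filter_upwards [hU.mem_nhds hx] with y hy using hmeas y hy
  · exact hg.mono' (hmeas x hx) (hbound.mono fun a ha => ha x hx)
  · refine aestronglyMeasurable_fderiv ?_ ?_
    · filter_upwards [hU.mem_nhds hx] with y hy using hmeas y hy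
    · filter_upwards [hdiff] with a ha using ha.differentiableAt (hU.mem_nhds hx)
  · filter_upwards [hdiff, hbound] with a ha hb y hy
    exact norm_fderiv_le_of_forall_norm_le (half_pos hr) (ha.mono (hball y hy))
      fun y' hy' => hb y' (hball y hy hy')
  · exact (hg.const_mul 2).div_const _

lemma differentiableOn_tsum_of_dominated [CompleteSpace F] [FiniteDimensional ℂ E] {U : Set E}
    {f : E → ℕ → F} {g : ℕ → ℝ} (hU : IsOpen U) (hdiff : ∀ k, DifferentiableOn ℂ (f · k) U)
    (hg : Summable g) (hbound : ∀ k, ∀ x ∈ U, ‖f x k‖ ≤ g k) :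
    DifferentiableOn ℂ (fun x => ∑' k, f x k) U := by
  have hsum : EqOn (fun x => ∑' k, f x k) (fun x => ∫ k, f x k ∂Measure.count) U := fun x hx => by
    beta_reduce
    rw [integral_countable (integrable_count_iff.2
      (hg.of_nonneg_of_le (fun _ => norm_nonneg _) fun k => hbound k x hx))]
    simp
  exact (differentiableOn_integral_of_dominated hU (fun x _ => .of_discrete) (.of_forall hdiff)
    (integrable_count_iff.2 hg.norm) (.of_forall hbound)).congr hsum

end ParametricIntegral

section OneVariable

variable {E : Type*} [NormedAddCommGroup E] [NormedSpace ℂ E] {f g : ℂ → E} {U : Set ℂ}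

lemma mem_rectangle_iff {z w ζ : ℂ} :
    ζ ∈ z.Rectangle w ↔ ζ.re ∈ uIcc z.re w.re ∧ ζ.im ∈ uIcc z.im w.im :=
  mem_reProdIm

lemma wedgeIntegral_add_wedgeIntegral_split {z w : ℂ} {c : ℝ} (hc : c ∈ uIcc z.im w.im)
    (hf : ContinuousOn f (z.Rectangle w)) :
    wedgeIntegral z w f + wedgeIntegral w z f =
      (wedgeIntegral z ⟨w.re, c⟩ f + wedgeIntegral ⟨w.re, c⟩ z f) +
        (wedgeIntegral ⟨z.re, c⟩ w f + wedgeIntegral w ⟨z.re, c⟩ f) := by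
  have hvert : ∀ a ∈ uIcc z.re w.re,
      ∫ y : ℝ in z.im..w.im, f (a + y * I) =
        (∫ y : ℝ in z.im..c, f (a + y * I)) + ∫ y : ℝ in c..w.im, f (a + y * I) := by
    intro a ha
    have hcont : ContinuousOn (fun y : ℝ => f (a + y * I)) (uIcc z.im w.im) :=
      hf.comp (by fun_prop) fun y hy => mem_rectangle_iff.2 (by simpa using ⟨ha, hy⟩)
    exact (intervalIntegral.integral_add_adjacent_intervals
      (hcont.mono (uIcc_subset_uIcc_left hc)).intervalIntegrable
      (hcont.mono (uIcc_subset_uIcc_right hc)).intervalIntegrable).symm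
  simp only [wedgeIntegral_add_wedgeIntegral_eq, hvert _ left_mem_uIcc, hvert _ right_mem_uIcc,
    smul_add]
  abel

lemma wedgeIntegral_add_wedgeIntegral_eq_zero {z w : ℂ} (hzw : z.Rectangle w ⊆ U)
    (hf : ContinuousOn f U) (hd : ∀ ζ ∈ U, ζ.im ≠ 0 → DifferentiableAt ℂ f ζ)
    (h0 : (0 : ℝ) ∉ Ioo (min z.im w.im) (max z.im w.im)) :
    wedgeIntegral z w f + wedgeIntegral w z f = 0 := by
  rw [wedgeIntegral_add_wedgeIntegral_eq]
  refine integral_boundary_rect_eq_zero_of_continuousOn_of_differentiableOn f z w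
    (hf.mono hzw) fun ζ hζ => (hd ζ (hzw ?_) ?_).differentiableWithinAt
  · exact mem_rectangle_iff.2 ⟨Ioo_subset_Icc_self hζ.1, Ioo_subset_Icc_self hζ.2⟩
  · exact fun him => h0 (him ▸ hζ.2)

variable [CompleteSpace E]

theorem differentiableOn_of_continuousOn_of_im_ne_zero (hU : IsOpen U) (hf : ContinuousOn f U)
    (hd : ∀ ζ ∈ U, ζ.im ≠ 0 → DifferentiableAt ℂ f ζ) : DifferentiableOn ℂ f U := by
  refine (isConservativeOn_and_continuousOn_iff_isDifferentiableOn hU).1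
    ⟨fun z w hzw => add_eq_zero_iff_eq_neg.1 ?_, hf⟩
  by_cases h0 : (0 : ℝ) ∈ Ioo (min z.im w.im) (max z.im w.im)
  · have h0' : (0 : ℝ) ∈ uIcc z.im w.im := Ioo_subset_Icc_self h0
    have hlower : z.Rectangle ⟨w.re, 0⟩ ⊆ U := fun ζ hζ => hzw <| mem_rectangle_iff.2
      ⟨(mem_rectangle_iff.1 hζ).1, uIcc_subset_uIcc_left h0' (mem_rectangle_iff.1 hζ).2⟩
    have hupper : Rectangle ⟨z.re, 0⟩ w ⊆ U := fun ζ hζ => hzw <| mem_rectangle_iff.2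
      ⟨(mem_rectangle_iff.1 hζ).1, uIcc_subset_uIcc_right h0' (mem_rectangle_iff.1 hζ).2⟩
    rw [wedgeIntegral_add_wedgeIntegral_split h0' (hf.mono hzw),
      wedgeIntegral_add_wedgeIntegral_eq_zero hlower hf hd (by grind),
      wedgeIntegral_add_wedgeIntegral_eq_zero hupper hf hd (by grind), add_zero]
  · exact wedgeIntegral_add_wedgeIntegral_eq_zero hzw hf hd h0

theorem eqOn_of_eventually_eq_ofReal (hf : DifferentiableOn ℂ f U) (hg : DifferentiableOn ℂ g U)
    (hU : IsOpen U) (hUc : IsPreconnected U) (h0 : (0 : ℂ) ∈ U)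
    (hfg : ∀ᶠ τ : ℝ in 𝓝 0, f τ = g τ) : EqOn f g U := by
  refine (hf.analyticOnNhd hU).eqOn_of_preconnected_of_frequently_eq (hg.analyticOnNhd hU) hUc h0 ?_
  have hlim : Tendsto ((↑) : ℝ → ℂ) (𝓝[≠] 0) (𝓝[≠] 0) :=
    continuous_ofReal.continuousAt.tendsto.inf <| tendsto_principal_principal.2 fun _ h => by
      simpa using h
  exact hlim.frequently (hfg.filter_mono nhdsWithin_le_nhds).frequently

theorem eq_zero_of_eq_zero_on_real (hU : IsOpen U) (hUc : IsPreconnected U)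
    (hlower : ∃ ζ ∈ U, ζ.im < 0) (hf : ContinuousOn f (U ∩ {ζ | 0 ≤ ζ.im}))
    (hd : ∀ ζ ∈ U, 0 < ζ.im → DifferentiableAt ℂ f ζ) (h0 : ∀ ζ ∈ U, ζ.im = 0 → f ζ = 0)
    {ζ : ℂ} (hζ : ζ ∈ U) (him : 0 ≤ ζ.im) : f ζ = 0 := by
  classical
  -- extended by zero to the lower half-plane, `f` becomes holomorphic across the real axis
  let u : ℂ → E := fun ζ => if 0 ≤ ζ.im then f ζ else 0
  have hu_neg : ∀ ζ : ℂ, ζ.im < 0 → u =ᶠ[𝓝 ζ] 0 := fun ζ hζ => by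
    filter_upwards [(isOpen_lt continuous_im continuous_const).mem_nhds hζ] with x hx
    exact if_neg (not_le.2 hx)
  have hu_pos : ∀ ζ : ℂ, 0 < ζ.im → u =ᶠ[𝓝 ζ] f := fun ζ hζ => by
    filter_upwards [(isOpen_lt continuous_const continuous_im).mem_nhds hζ] with x hx
    exact if_pos (le_of_lt hx)
  have hu_cont : ContinuousOn u U := by
    refine ContinuousOn.if (fun ζ hζ => h0 ζ hζ.1 ?_) (hf.mono ?_) continuousOn_const
    · exact (frontier_le_subset_eq continuous_const continuous_im hζ.2).symm
    · exact inter_subset_inter_right U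
        (isClosed_le continuous_const continuous_im).closure_eq.subset
  have hu : AnalyticOnNhd ℂ u U := by
    refine (differentiableOn_of_continuousOn_of_im_ne_zero hU hu_cont ?_).analyticOnNhd hU
    intro ζ hζ hne
    rcases lt_or_gt_of_ne hne with h | h
    · exact (hu_neg ζ h).differentiableAt_iff.2 (differentiableAt_const 0)
    · exact (hu_pos ζ h).differentiableAt_iff.2 (hd ζ hζ h)
  obtain ⟨ζ₀, hζ₀, him₀⟩ := hlower
  have huζ : u ζ = 0 :=
    hu.eqOn_zero_of_preconnected_of_eventuallyEq_zero hUc hζ₀ (hu_neg ζ₀ him₀) hζ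
  rwa [← if_pos (c := 0 ≤ ζ.im) (t := f ζ) (e := 0) him]

end OneVariable

section Tubes

variable {ι κ F : Type*}

/-- The tube `ℝ^ι + iC ⊆ ℂ^ι` over a set `C` of imaginary parts. The edge `ℝ^ι` is `tubeOver {0}`,
and the wedge `W_C` of the CR setting is the image of a truncated tube. -/
def tubeOver (C : Set (ι → ℝ)) : Set (ι → ℂ) := {w | (fun j => (w j).im) ∈ C}

lemma mem_tubeOver_zero {w : ι → ℂ} : w ∈ tubeOver {0} ↔ ∀ j, (w j).im = 0 := funext_iff

lemma mem_tubeOver_of_im_eq {C : Set (ι → ℝ)} {w : ι → ℂ} {t : ι → ℝ} (ht : t ∈ C)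
    (h : ∀ j, (w j).im = t j) : w ∈ tubeOver C := by
  rwa [← funext h] at ht

lemma isOpen_tubeOver {C : Set (ι → ℝ)} (hC : IsOpen C) : IsOpen (tubeOver C) :=
  hC.preimage (by fun_prop)

/-- The open orthant of vectors all of whose coordinates have sign `s`; for `s = 0` it degenerates
to the origin, so that `tubeOver (orthant ι 0)` is the edge. -/
def orthant (ι : Type*) (s : SignType) : Set (ι → ℝ) := {y | ∀ j, SignType.sign (y j) = s}

lemma orthant_zero : orthant ι 0 = {0} := by
  ext y
  simp [orthant, sign_eq_zero_iff, funext_iff]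

lemma isOpen_orthant_one [Finite ι] : IsOpen (orthant ι 1) := by
  simp only [orthant, sign_eq_one_iff, ofPred_forall]
  exact isOpen_iInter_of_finite fun j => isOpen_lt continuous_const (continuous_apply j)

lemma isOpen_orthant_neg_one [Finite ι] : IsOpen (orthant ι (-1)) := by
  simp only [orthant, sign_eq_neg_one_iff, ofPred_forall]
  exact isOpen_iInter_of_finite fun j => isOpen_lt (continuous_apply j) continuous_const

variable [Fintype ι] [Fintype κ] [NormedAddCommGroup F] [NormedSpace ℂ F]

/-- `f` is continuous and bounded by `B` on the part of the tube over `C`, with its edge `ℝ^ι`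
added, that lies in the ball of radius `R`, and holomorphic off the edge. This is the datum on one
side of the edge-of-the-wedge theorem. -/
structure HolomorphicToEdge (C : Set (ι → ℝ)) (R B : ℝ) (f : (ι → ℂ) → F) : Prop where
  differentiableOn : DifferentiableOn ℂ f (ball 0 R ∩ tubeOver C)
  continuousOn : ContinuousOn f (ball 0 R ∩ (tubeOver C ∪ tubeOver {0}))
  norm_le : ∀ w ∈ ball 0 R ∩ (tubeOver C ∪ tubeOver {0}), ‖f w‖ ≤ B

lemma HolomorphicToEdge.comp_continuousLinearMap {C : Set (κ → ℝ)} {D : Set (ι → ℝ)}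
    {R S B : ℝ} {f : (κ → ℂ) → F} (hf : HolomorphicToEdge C R B f)
    (A : (ι → ℂ) →L[ℂ] (κ → ℂ)) (hball : MapsTo A (ball 0 S) (ball 0 R))
    (hD : MapsTo A (tubeOver D) (tubeOver C)) (hedge : MapsTo A (tubeOver {0}) (tubeOver {0})) :
    HolomorphicToEdge D S B (f ∘ A) := by
  have hmaps : MapsTo A (ball 0 S ∩ (tubeOver D ∪ tubeOver {0}))
      (ball 0 R ∩ (tubeOver C ∪ tubeOver {0})) := hball.inter_inter (hD.union_union hedge)
  exact ⟨hf.differentiableOn.comp A.differentiable.differentiableOn (hball.inter_inter hD),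
    hf.continuousOn.comp A.continuous.continuousOn hmaps, fun w hw => hf.norm_le _ (hmaps hw)⟩

lemma HolomorphicToEdge.mono {C : Set (ι → ℝ)} {R S B : ℝ} {f : (ι → ℂ) → F}
    (hf : HolomorphicToEdge C R B f) (hSR : S ≤ R) : HolomorphicToEdge C S B f :=
  hf.comp_continuousLinearMap (.id ℂ (ι → ℂ)) (ball_subset_ball hSR) (mapsTo_id _) (mapsTo_id _)

end Tubes

section RudinDisc

variable {ι F : Type*}

/-- For fixed `w`, an analytic disc in `ℂ^ι` centred at `w` whose upper and lower unit
half-circles lie in the tubes over the positive and negative orthants. It comes from Rudin's proof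
of the edge-of-the-wedge theorem. -/
def rudinDisc (w : ι → ℂ) (l : ℂ) : ι → ℂ := fun j => (w j + 2 * l) / (1 + l * w j / 2)

@[simp] lemma rudinDisc_zero (w : ι → ℂ) : rudinDisc w 0 = w := by
  funext j
  simp [rudinDisc]

lemma half_lt_norm_one_add_mul_div_two {a l : ℂ} (ha : ‖a‖ < 1) (hl : ‖l‖ ≤ 1) :
    1 / 2 < ‖1 + l * a / 2‖ := by
  have hsmall : ‖l * a / 2‖ < 1 / 2 := by
    rw [norm_div, norm_mul, Complex.norm_ofNat]
    nlinarith [norm_nonneg a, norm_nonneg l]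
  have htriangle := norm_sub_norm_le (1 : ℂ) (-(l * a / 2))
  rw [norm_neg, sub_neg_eq_add, norm_one] at htriangle
  linarith

lemma one_add_mul_div_two_ne_zero {a l : ℂ} (ha : ‖a‖ < 1) (hl : ‖l‖ ≤ 1) : 1 + l * a / 2 ≠ 0 :=
  norm_pos_iff.1 (one_half_pos.trans (half_lt_norm_one_add_mul_div_two ha hl))

lemma sign_im_div_eq_sign_im {a l : ℂ} (ha : ‖a‖ < 1) (hl : ‖l‖ ≤ 1) (h : ‖l‖ = 1 ∨ a.im = 0) :
    SignType.sign ((a + 2 * l) / (1 + l * a / 2)).im = SignType.sign l.im := by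
  have hden : 0 < normSq (1 + l * a / 2) := normSq_pos.2 (one_add_mul_div_two_ne_zero ha hl)
  have ha' : normSq a < 1 := by rw [normSq_eq_norm_sq]; nlinarith [norm_nonneg a]
  have hcancel : a.im * (1 - normSq l) = 0 := by
    rcases h with h | h
    · rw [normSq_eq_norm_sq, h]; ring
    · rw [h, zero_mul]
  have him : ((a + 2 * l) / (1 + l * a / 2)).im =
      (2 - normSq a / 2) / normSq (1 + l * a / 2) * l.im := by
    rw [div_im, ← sub_div, div_mul_eq_mul_div]
    congr 1
    simp only [normSq_apply] at hcancel ⊢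
    simp
    linear_combination hcancel
  rw [him, sign_mul, sign_pos (div_pos (by linarith) hden), one_mul]

variable [Fintype ι] {w : ι → ℂ} {l : ℂ}

lemma norm_apply_lt_one (hw : w ∈ ball 0 1) (j : ι) : ‖w j‖ < 1 :=
  (norm_le_pi_norm w j).trans_lt (mem_ball_zero_iff.1 hw)

lemma rudinDisc_mem_ball (hw : w ∈ ball 0 1) (hl : ‖l‖ ≤ 1) : rudinDisc w l ∈ ball 0 6 := by
  rw [mem_ball_zero_iff, pi_norm_lt_iff (by norm_num)]
  intro j
  have hden := half_lt_norm_one_add_mul_div_two (norm_apply_lt_one hw j) hl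
  rw [rudinDisc, norm_div, div_lt_iff₀ (by linarith)]
  have hnum := norm_add_le (w j) (2 * l)
  rw [norm_mul, Complex.norm_ofNat] at hnum
  linarith [norm_apply_lt_one hw j]

lemma rudinDisc_mem_tubeOver (hw : w ∈ ball 0 1) (hl : ‖l‖ ≤ 1)
    (h : ‖l‖ = 1 ∨ w ∈ tubeOver {0}) :
    rudinDisc w l ∈ tubeOver (orthant ι (SignType.sign l.im)) := fun j =>
  sign_im_div_eq_sign_im (norm_apply_lt_one hw j) hl (h.imp_right (mem_tubeOver_zero.1 · j))

lemma differentiableAt_rudinDisc (hw : w ∈ ball 0 1) (hl : ‖l‖ ≤ 1) :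
    DifferentiableAt ℂ (rudinDisc w) l :=
  differentiableAt_pi.2 fun j => by
    have hden := one_add_mul_div_two_ne_zero (norm_apply_lt_one hw j) hl
    unfold rudinDisc
    fun_prop (disch := exact hden)

lemma differentiableOn_rudinDisc_left (hl : ‖l‖ ≤ 1) :
    DifferentiableOn ℂ (fun w : ι → ℂ => rudinDisc w l) (ball 0 1) := fun w hw =>
  DifferentiableAt.differentiableWithinAt <| differentiableAt_pi.2 fun j => by
    have hden := one_add_mul_div_two_ne_zero (norm_apply_lt_one hw j) hl
    unfold rudinDisc
    fun_prop (disch := exact hden)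

end RudinDisc

section CircleAverage

open Real (circleAverage)

variable {E F : Type*} [NormedAddCommGroup E] [NormedSpace ℂ E] [NormedAddCommGroup F]
  [NormedSpace ℂ F]

lemma norm_circleAverage_le {k : ℂ → F} {c : ℂ} {R B : ℝ} (hB : ∀ l ∈ sphere c |R|, ‖k l‖ ≤ B) :
    ‖circleAverage k c R‖ ≤ B := by
  have hint : ‖∫ θ in (0 : ℝ)..2 * Real.pi, k (circleMap c R θ)‖ ≤ B * |2 * Real.pi - 0| :=
    intervalIntegral.norm_integral_le_of_norm_le_const fun θ _ => hB _ (circleMap_mem_sphere' c R θ)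
  rw [sub_zero, abs_of_pos Real.two_pi_pos] at hint
  rwa [Real.circleAverage_def, norm_smul, norm_inv, Real.norm_of_nonneg Real.two_pi_pos.le,
    inv_mul_le_iff₀ Real.two_pi_pos, mul_comm _ B]

lemma ae_im_circleMap_ne_zero (ν : Measure ℝ) [NullSingletonClass ν] :
    ∀ᵐ θ ∂ν, (circleMap 0 1 θ).im ≠ 0 := by
  have hcount : {θ : ℝ | Real.sin θ = 0}.Countable := by
    convert countable_range fun k : ℤ => (k : ℝ) * Real.pi using 1
    ext θ
    simp [Real.sin_eq_zero_iff]
  filter_upwards [hcount.ae_notMem ν] with θ hθ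
  simpa [circleMap, exp_ofReal_mul_I_im] using hθ

lemma differentiableOn_circleAverage [FiniteDimensional ℂ E] {k : E → ℂ → F} {U : Set E} {B : ℝ}
    (hU : IsOpen U) (hcont : ∀ w ∈ U, ContinuousOn (k w) (sphere 0 1))
    (hdiff : ∀ l : ℂ, ‖l‖ = 1 → l.im ≠ 0 → DifferentiableOn ℂ (k · l) U)
    (hB : ∀ w ∈ U, ∀ l : ℂ, ‖l‖ = 1 → ‖k w l‖ ≤ B) :
    DifferentiableOn ℂ (fun w => circleAverage (k w) 0 1) U := by
  have hnorm : ∀ θ, ‖circleMap 0 1 θ‖ = 1 := by simp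
  have hint : DifferentiableOn ℂ
      (fun w => ∫ θ in Ioc 0 (2 * Real.pi), k w (circleMap 0 1 θ)) U := by
    refine differentiableOn_integral_of_dominated hU (g := fun _ => B) (fun w hw => ?_) ?_
      (integrable_const B) (.of_forall fun θ w hw => hB w hw _ (hnorm θ))
    · exact ((hcont w hw).comp_continuous (continuous_circleMap 0 1)
        fun θ => by simp).aestronglyMeasurable
    · filter_upwards [ae_im_circleMap_ne_zero _] with θ hθ using hdiff _ (hnorm θ) hθ
  refine (hint.const_smul (2 * Real.pi : ℝ)⁻¹).congr fun w _ => ?_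
  simp only [Real.circleAverage_def, intervalIntegral.integral_of_le Real.two_pi_pos.le,
    Pi.smul_apply]

end CircleAverage

section OrthantEdge

variable {ι F : Type*} [Fintype ι] [NormedAddCommGroup F] [NormedSpace ℂ F]
  {p m : (ι → ℂ) → F} {B : ℝ} {w : ι → ℂ} {l : ℂ}

lemma rudinDisc_mem_of_im_nonneg (hw : w ∈ ball 0 1) (hl : ‖l‖ ≤ 1)
    (h : ‖l‖ = 1 ∨ w ∈ tubeOver {0}) (him : 0 ≤ l.im) :
    rudinDisc w l ∈ ball 0 6 ∩ (tubeOver (orthant ι 1) ∪ tubeOver {0}) := by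
  refine ⟨rudinDisc_mem_ball hw hl, ?_⟩
  have hmem := rudinDisc_mem_tubeOver hw hl h
  rcases him.eq_or_lt with h0 | hpos
  · exact Or.inr (by rwa [← h0, sign_zero, orthant_zero] at hmem)
  · exact Or.inl (by rwa [sign_pos hpos] at hmem)

lemma rudinDisc_mem_of_im_nonpos (hw : w ∈ ball 0 1) (hl : ‖l‖ ≤ 1)
    (h : ‖l‖ = 1 ∨ w ∈ tubeOver {0}) (him : l.im ≤ 0) :
    rudinDisc w l ∈ ball 0 6 ∩ (tubeOver (orthant ι (-1)) ∪ tubeOver {0}) := by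
  refine ⟨rudinDisc_mem_ball hw hl, ?_⟩
  have hmem := rudinDisc_mem_tubeOver hw hl h
  rcases him.eq_or_lt with h0 | hneg
  · exact Or.inr (by rwa [h0, sign_zero, orthant_zero] at hmem)
  · exact Or.inl (by rwa [sign_neg hneg] at hmem)

/-- The function that `p` (on the upper half) and `m` (on the lower half) induce on the Rudin disc
centred at `w`. -/
def rudinGlue (p m : (ι → ℂ) → F) (w : ι → ℂ) (l : ℂ) : F :=
  if 0 ≤ l.im then p (rudinDisc w l) else m (rudinDisc w l)

lemma norm_rudinGlue_le (hp : HolomorphicToEdge (orthant ι 1) 6 B p)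
    (hm : HolomorphicToEdge (orthant ι (-1)) 6 B m) (hw : w ∈ ball 0 1) (hl : ‖l‖ = 1) :
    ‖rudinGlue p m w l‖ ≤ B := by
  unfold rudinGlue
  split_ifs with him
  · exact hp.norm_le _ (rudinDisc_mem_of_im_nonneg hw hl.le (.inl hl) him)
  · exact hm.norm_le _ (rudinDisc_mem_of_im_nonpos hw hl.le (.inl hl) (not_le.1 him).le)

lemma continuousOn_rudinGlue (hp : HolomorphicToEdge (orthant ι 1) 6 B p)
    (hm : HolomorphicToEdge (orthant ι (-1)) 6 B m) (heq : EqOn p m (ball 0 6 ∩ tubeOver {0}))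
    (hw : w ∈ ball 0 1) {T : Set ℂ} (hT : ∀ l ∈ T, ‖l‖ ≤ 1)
    (h : ∀ l ∈ T, ‖l‖ = 1 ∨ w ∈ tubeOver {0}) : ContinuousOn (rudinGlue p m w) T := by
  have hdisc : ContinuousOn (rudinDisc w) T := fun l hl =>
    (differentiableAt_rudinDisc hw (hT l hl)).continuousAt.continuousWithinAt
  refine ContinuousOn.if (fun l hl => heq ⟨rudinDisc_mem_ball hw (hT l hl.1), ?_⟩)
    (hp.continuousOn.comp (hdisc.mono inter_subset_left) fun l hl => ?_)
    (hm.continuousOn.comp (hdisc.mono inter_subset_left) fun l hl => ?_)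
  · have him : l.im = 0 := (frontier_le_subset_eq continuous_const continuous_im hl.2).symm
    simpa only [him, sign_zero, orthant_zero] using
      rudinDisc_mem_tubeOver hw (hT l hl.1) (h l hl.1)
  · exact rudinDisc_mem_of_im_nonneg hw (hT l hl.1) (h l hl.1)
      ((isClosed_le continuous_const continuous_im).closure_subset hl.2)
  · refine rudinDisc_mem_of_im_nonpos hw (hT l hl.1) (h l hl.1) ?_
    exact closure_minimal (fun x hx => (not_le.1 hx).le)
      (isClosed_le continuous_im continuous_const) hl.2

lemma differentiableOn_rudinGlue_left (hp : HolomorphicToEdge (orthant ι 1) 6 B p)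
    (hm : HolomorphicToEdge (orthant ι (-1)) 6 B m) (hl : ‖l‖ = 1) (him : l.im ≠ 0) :
    DifferentiableOn ℂ (rudinGlue p m · l) (ball 0 1) := by
  unfold rudinGlue
  rcases lt_or_gt_of_ne him with h | h
  · simp only [if_neg (not_le.2 h)]
    exact hm.differentiableOn.comp (differentiableOn_rudinDisc_left hl.le) fun w hw =>
      ⟨rudinDisc_mem_ball hw hl.le,
        by simpa only [sign_neg h] using rudinDisc_mem_tubeOver hw hl.le (.inl hl)⟩
  · simp only [if_pos (le_of_lt h)]
    exact hp.differentiableOn.comp (differentiableOn_rudinDisc_left hl.le) fun w hw =>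
      ⟨rudinDisc_mem_ball hw hl.le,
        by simpa only [sign_pos h] using rudinDisc_mem_tubeOver hw hl.le (.inl hl)⟩

lemma differentiableAt_rudinGlue (hp : HolomorphicToEdge (orthant ι 1) 6 B p)
    (hm : HolomorphicToEdge (orthant ι (-1)) 6 B m) (hw : w ∈ ball 0 1)
    (hreal : w ∈ tubeOver {0}) (hl : ‖l‖ ≤ 1) (him : l.im ≠ 0) :
    DifferentiableAt ℂ (rudinGlue p m w) l := by
  have hmem := rudinDisc_mem_tubeOver hw hl (.inr hreal)
  have hdisc := differentiableAt_rudinDisc hw hl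
  rcases lt_or_gt_of_ne him with h | h
  · have hglue : rudinGlue p m w =ᶠ[𝓝 l] m ∘ rudinDisc w := by
      filter_upwards [(isOpen_lt continuous_im continuous_const).mem_nhds h] with x hx
      exact if_neg (not_le.2 hx)
    refine hglue.differentiableAt_iff.2 (DifferentiableAt.comp l ?_ hdisc)
    rw [sign_neg h] at hmem
    exact hm.differentiableOn.differentiableAt <|
      (isOpen_ball.inter (isOpen_tubeOver isOpen_orthant_neg_one)).mem_nhds
        ⟨rudinDisc_mem_ball hw hl, hmem⟩
  · have hglue : rudinGlue p m w =ᶠ[𝓝 l] p ∘ rudinDisc w := by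
      filter_upwards [(isOpen_lt continuous_const continuous_im).mem_nhds h] with x hx
      exact if_pos (le_of_lt hx)
    refine hglue.differentiableAt_iff.2 (DifferentiableAt.comp l ?_ hdisc)
    rw [sign_pos h] at hmem
    exact hp.differentiableOn.differentiableAt <|
      (isOpen_ball.inter (isOpen_tubeOver isOpen_orthant_one)).mem_nhds
        ⟨rudinDisc_mem_ball hw hl, hmem⟩

theorem exists_extension_of_orthants [CompleteSpace F]
    (hp : HolomorphicToEdge (orthant ι 1) 6 B p) (hm : HolomorphicToEdge (orthant ι (-1)) 6 B m)
    (heq : EqOn p m (ball 0 6 ∩ tubeOver {0})) :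
    ∃ g : (ι → ℂ) → F, DifferentiableOn ℂ g (ball 0 1) ∧ (∀ w ∈ ball 0 1, ‖g w‖ ≤ B) ∧
      EqOn g p (ball 0 1 ∩ tubeOver {0}) := by
  have hsphere : ∀ l ∈ sphere (0 : ℂ) 1, ‖l‖ = 1 := fun l => mem_sphere_zero_iff_norm.1
  refine ⟨fun w => Real.circleAverage (rudinGlue p m w) 0 1,
    differentiableOn_circleAverage isOpen_ball (fun w hw => ?_)
      (fun l => differentiableOn_rudinGlue_left hp hm) fun w hw l => norm_rudinGlue_le hp hm hw,
    fun w hw => norm_circleAverage_le fun l hl => norm_rudinGlue_le hp hm hw ?_, ?_⟩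
  · exact continuousOn_rudinGlue hp hm heq hw (fun l hl => (hsphere l hl).le)
      fun l hl => .inl (hsphere l hl)
  · exact hsphere l (by rwa [abs_one] at hl)
  · rintro w ⟨hw, hreal⟩
    have hcont : ContinuousOn (rudinGlue p m w) (closedBall 0 1) :=
      continuousOn_rudinGlue hp hm heq hw (fun l => mem_closedBall_zero_iff.1)
        fun _ _ => .inr hreal
    have hdiff : DifferentiableOn ℂ (rudinGlue p m w) (ball 0 1) :=
      differentiableOn_of_continuousOn_of_im_ne_zero isOpen_ball
        (hcont.mono ball_subset_closedBall) fun l hl =>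
          differentiableAt_rudinGlue hp hm hw hreal (mem_ball_zero_iff.1 hl).le
    have hcenter : Real.circleAverage (rudinGlue p m w) 0 1 = rudinGlue p m w 0 := by
      refine DiffContOnCl.circleAverage ?_
      rw [abs_one]
      exact ⟨hdiff, by rwa [closure_ball _ one_ne_zero]⟩
    simpa [rudinGlue] using hcenter

end OrthantEdge

section ConeEdge

variable {ι F : Type*} [NormedAddCommGroup F] [NormedSpace ℂ F] {Γ : Set (ι → ℝ)}

lemma smul_mem_tubeOver (hΓ : ∀ t ∈ Γ, ∀ c : ℝ, 0 < c → c • t ∈ Γ) {w : ι → ℂ}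
    (hw : w ∈ tubeOver Γ) {s : ℝ} (hs : 0 < s) : s • w ∈ tubeOver Γ :=
  mem_tubeOver_of_im_eq (hΓ _ hw s hs) fun j => by simp

lemma smul_mem_tubeOver_zero {w : ι → ℂ} (hw : w ∈ tubeOver {0}) (s : ℝ) :
    s • w ∈ tubeOver {0} := by
  rw [mem_tubeOver_zero] at hw ⊢
  simp [hw]

/-- The complex line `ζ ↦ Re w + ζ Im w` through `w`. If `Γ` is a cone and `w ∈ tubeOver Γ`, it maps
the upper half-plane into `tubeOver Γ` and the real axis into the edge. -/
def imLine (w : ι → ℂ) (ζ : ℂ) : ι → ℂ := fun j => (w j).re + ζ * (w j).im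

lemma imLine_I (w : ι → ℂ) : imLine w I = w := by
  funext j
  rw [imLine, mul_comm, re_add_im]

lemma imLine_apply_im (w : ι → ℂ) (ζ : ℂ) (j : ι) : (imLine w ζ j).im = ζ.im * (w j).im := by
  simp [imLine]

lemma differentiable_imLine [Finite ι] (w : ι → ℂ) : Differentiable ℂ (imLine w) :=
  differentiable_pi.2 fun j => by unfold imLine; fun_prop

lemma imLine_mem_tubeOver (hΓ : ∀ t ∈ Γ, ∀ c : ℝ, 0 < c → c • t ∈ Γ) {w : ι → ℂ}
    (hw : w ∈ tubeOver Γ) {ζ : ℂ} (hζ : 0 < ζ.im) : imLine w ζ ∈ tubeOver Γ :=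
  mem_tubeOver_of_im_eq (hΓ _ hw ζ.im hζ) (imLine_apply_im w ζ)

lemma imLine_mem_edge (w : ι → ℂ) {ζ : ℂ} (hζ : ζ.im = 0) : imLine w ζ ∈ tubeOver {0} :=
  mem_tubeOver_zero.2 fun j => by rw [imLine_apply_im, hζ, zero_mul]

section ConeMap

variable [Fintype ι]

/-- The real endomorphism `a • id + b • (t ⊗ ∑ⱼ xⱼ)` of `ℂ^ι`. With `a` small and `b = 1` it maps
the positive orthant into a narrow cone around `t`. -/
def coneMap (a b : ℝ) (t : ι → ℝ) : (ι → ℂ) →L[ℂ] (ι → ℂ) :=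
  (a : ℂ) • ContinuousLinearMap.id ℂ (ι → ℂ) +
    (∑ j, ContinuousLinearMap.proj (R := ℂ) (φ := fun _ : ι => ℂ) j).smulRight
      (fun k => ((b * t k : ℝ) : ℂ))

lemma coneMap_apply (a b : ℝ) (t : ι → ℝ) (w : ι → ℂ) (k : ι) :
    coneMap a b t w k = a * w k + (∑ j, w j) * (b * t k : ℝ) := by
  simp [coneMap]

lemma coneMap_apply_im (a b : ℝ) (t : ι → ℝ) (w : ι → ℂ) (k : ι) :
    (coneMap a b t w k).im = a * (w k).im + (∑ j, (w j).im) * (b * t k) := by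
  rw [coneMap_apply, add_im, im_ofReal_mul, im_mul_ofReal, im_sum]

lemma coneMap_mapsTo_edge (a b : ℝ) (t : ι → ℝ) :
    MapsTo (coneMap a b t) (tubeOver {0}) (tubeOver {0}) := by
  intro w hw
  rw [mem_tubeOver_zero] at hw ⊢
  simp [coneMap_apply_im, hw]

lemma coneMap_coneMap {a a' b b' : ℝ} {t : ι → ℝ} (ha : a * a' = 1)
    (hb : a * b' + b * (a' + b' * ∑ j, t j) = 0) (w : ι → ℂ) :
    coneMap a b t (coneMap a' b' t w) = w := by
  funext k
  have ha' : (a : ℂ) * a' = 1 := mod_cast ha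
  have hb' : (a : ℂ) * b' + b * (a' + b' * ∑ j, (t j : ℂ)) = 0 := mod_cast hb
  simp only [coneMap_apply, Finset.sum_add_distrib, ← Finset.mul_sum, ofReal_mul]
  linear_combination w k * ha' + (∑ j, w j) * t k * hb'

/-- `coneMap c 1 t` as an isomorphism. -/
def coneEquiv {c : ℝ} {t : ι → ℝ} (hc : c ≠ 0) (hct : c + ∑ j, t j ≠ 0) :
    (ι → ℂ) ≃L[ℂ] (ι → ℂ) :=
  ContinuousLinearEquiv.equivOfInverse (coneMap c 1 t) (coneMap c⁻¹ (-(c * (c + ∑ j, t j))⁻¹) t)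
    (coneMap_coneMap (inv_mul_cancel₀ hc) (by field_simp; ring))
    (coneMap_coneMap (mul_inv_cancel₀ hc) (by field_simp; ring))

lemma coneMap_mapsTo_tubeOver [Nonempty ι] (hΓ : ∀ t ∈ Γ, ∀ c : ℝ, 0 < c → c • t ∈ Γ) {t : ι → ℝ}
    {c : ℝ} (hc : 0 < c) (hball : closedBall t c ⊆ Γ) :
    MapsTo (coneMap c 1 t) (tubeOver (orthant ι 1)) (tubeOver Γ) := by
  intro w hw
  have hpos : ∀ j, 0 < (w j).im := fun j => sign_eq_one_iff.1 (hw j)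
  set S := ∑ j, (w j).im with hS
  have hS0 : 0 < S := Finset.sum_pos (fun j _ => hpos j) Finset.univ_nonempty
  have hmem : (fun k => t k + c / S * (w k).im) ∈ Γ := by
    refine hball (mem_closedBall_iff_norm.2 ((pi_norm_le_iff_of_nonneg hc.le).2 fun k => ?_))
    have hk : (w k).im ≤ S := Finset.single_le_sum (f := fun j => (w j).im)
      (fun j _ => (hpos j).le) (Finset.mem_univ k)
    have hk0 := hpos k
    rw [Pi.sub_apply, add_sub_cancel_left, Real.norm_of_nonneg (by positivity),
      div_mul_eq_mul_div, div_le_iff₀ hS0]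
    gcongr
  refine mem_tubeOver_of_im_eq (hΓ _ hmem S hS0) fun k => ?_
  rw [coneMap_apply_im, ← hS, Pi.smul_apply, smul_eq_mul]
  field_simp
  ring

end ConeMap

lemma exists_continuousLinearEquiv_mapsTo_cone [Finite ι] [Nonempty ι] (hΓo : IsOpen Γ)
    (hΓne : Γ.Nonempty) (hΓ : ∀ t ∈ Γ, ∀ c : ℝ, 0 < c → c • t ∈ Γ) :
    ∃ A : (ι → ℂ) ≃L[ℂ] (ι → ℂ), MapsTo A (tubeOver (orthant ι 1)) (tubeOver Γ) ∧
      MapsTo A (tubeOver {0}) (tubeOver {0}) ∧ MapsTo A.symm (tubeOver {0}) (tubeOver {0}) := by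
  have := Fintype.ofFinite ι
  obtain ⟨t, ht⟩ := hΓne
  obtain ⟨c₀, hc₀, hball⟩ := nhds_basis_closedBall.mem_iff.1 (hΓo.mem_nhds ht)
  obtain ⟨c, hc, hcc, hct⟩ : ∃ c : ℝ, 0 < c ∧ c ≤ c₀ ∧ c + ∑ j, t j ≠ 0 := by
    by_cases h : c₀ + ∑ j, t j = 0
    · exact ⟨c₀ / 2, half_pos hc₀, half_le_self hc₀.le, fun h' => by linarith⟩
    · exact ⟨c₀, hc₀, le_rfl, h⟩
  exact ⟨coneEquiv hc.ne' hct,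
    coneMap_mapsTo_tubeOver hΓ hc ((closedBall_subset_closedBall hcc).trans hball),
    coneMap_mapsTo_edge c 1 t, coneMap_mapsTo_edge _ _ t⟩

variable [Fintype ι]

lemma imLine_zero_mem_ball {w : ι → ℂ} {R : ℝ} (hw : w ∈ ball 0 R) : imLine w 0 ∈ ball 0 R := by
  refine mem_ball_zero_iff.2 (lt_of_le_of_lt ?_ (mem_ball_zero_iff.1 hw))
  refine (pi_norm_le_iff_of_nonneg (norm_nonneg w)).2 fun j => ?_
  simpa [imLine] using (abs_re_le_norm (w j)).trans (norm_le_pi_norm w j)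

lemma convex_imLine_preimage_ball (w : ι → ℂ) (R : ℝ) : Convex ℝ (imLine w ⁻¹' ball 0 R) := by
  intro a ha b hb s t hs ht hst
  have hcomb : imLine w (s • a + t • b) = s • imLine w a + t • imLine w b := by
    have hst' : (s : ℂ) + t = 1 := mod_cast hst
    funext j
    simp only [imLine, Pi.add_apply, Pi.smul_apply, real_smul]
    linear_combination -((w j).re : ℂ) * hst'
  rw [mem_preimage, hcomb]
  exact convex_ball 0 R ha hb hs ht hst

variable {R B : ℝ} {g p m : (ι → ℂ) → F}

theorem HolomorphicToEdge.eqOn_of_eqOn_edge [CompleteSpace F] (hΓo : IsOpen Γ)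
    (hΓ : ∀ t ∈ Γ, ∀ c : ℝ, 0 < c → c • t ∈ Γ) (hp : HolomorphicToEdge Γ R B p)
    (hg : DifferentiableOn ℂ g (ball 0 R)) (hgp : EqOn g p (ball 0 R ∩ tubeOver {0})) :
    EqOn g p (ball 0 R ∩ tubeOver Γ) := by
  rintro w ⟨hw, hwΓ⟩
  have hL := differentiable_imLine w
  have hopen : IsOpen (imLine w ⁻¹' ball 0 R) := isOpen_ball.preimage hL.continuous
  have hlower : ∃ ζ ∈ imLine w ⁻¹' ball 0 R, ζ.im < 0 := by
    obtain ⟨ε, hε, hεU⟩ := Metric.isOpen_iff.1 hopen 0 (imLine_zero_mem_ball hw)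
    exact ⟨-(ε / 2 : ℝ) * I, hεU (by simp [abs_of_pos hε, hε]), by simp [hε]⟩
  have hzero := eq_zero_of_eq_zero_on_real (f := fun ζ => g (imLine w ζ) - p (imLine w ζ)) hopen
    (convex_imLine_preimage_ball w R).isPreconnected hlower ?_ ?_ ?_ (ζ := I)
    (by rwa [mem_preimage, imLine_I]) (by simp)
  · rwa [imLine_I, sub_eq_zero] at hzero
  · refine (hg.continuousOn.comp hL.continuous.continuousOn fun ζ hζ => hζ.1).sub
      (hp.continuousOn.comp hL.continuous.continuousOn fun ζ hζ => ⟨hζ.1, ?_⟩)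
    exact hζ.2.eq_or_lt.elim (fun h => .inr (imLine_mem_edge w h.symm))
      fun h => .inl (imLine_mem_tubeOver hΓ hwΓ h)
  · intro ζ hζ him
    exact ((hg.differentiableAt (isOpen_ball.mem_nhds hζ)).comp ζ (hL ζ)).sub
      ((hp.differentiableOn.differentiableAt ((isOpen_ball.inter (isOpen_tubeOver hΓo)).mem_nhds
        ⟨hζ, imLine_mem_tubeOver hΓ hwΓ him⟩)).comp ζ (hL ζ))
  · exact fun ζ hζ him => sub_eq_zero.2 (hgp ⟨hζ, imLine_mem_edge w him⟩)

lemma mapsTo_smul_ball {E G : Type*} [NormedAddCommGroup E] [NormedSpace ℂ E]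
    [NormedAddCommGroup G] [NormedSpace ℂ G] (A : E →L[ℂ] G) {s r R : ℝ} (hs : 0 < s)
    (hR : s * ((‖A‖ + 1) * r) = R) : MapsTo (s • A) (ball 0 r) (ball 0 R) := by
  intro w hw
  rw [mem_ball_zero_iff] at hw ⊢
  calc ‖s • A w‖ = s * ‖A w‖ := by rw [norm_smul, Real.norm_of_nonneg hs.le]
    _ ≤ s * ((‖A‖ + 1) * ‖w‖) := by
      gcongr
      exact (A.le_opNorm w).trans (by gcongr; linarith)
    _ < R := by rw [← hR]; gcongr

lemma exists_extension_of_mapsTo_orthant [CompleteSpace F] {S : ℝ} (hΓo : IsOpen Γ)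
    (hΓ : ∀ t ∈ Γ, ∀ c : ℝ, 0 < c → c • t ∈ Γ) {T T' : (ι → ℂ) →L[ℂ] ι → ℂ}
    (hTT' : ∀ w, T (T' w) = w) (hT : MapsTo T (ball 0 6) (ball 0 R))
    (hT' : MapsTo T' (ball 0 S) (ball 0 1))
    (hTΓ : MapsTo T (tubeOver (orthant ι 1)) (tubeOver Γ))
    (hT0 : MapsTo T (tubeOver {0}) (tubeOver {0})) (hT0' : MapsTo T' (tubeOver {0}) (tubeOver {0}))
    (hSR : S ≤ R) (hp : HolomorphicToEdge Γ R B p) (hm : HolomorphicToEdge {t | -t ∈ Γ} R B m)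
    (heq : EqOn p m (ball 0 R ∩ tubeOver {0})) :
    ∃ g, DifferentiableOn ℂ g (ball 0 S) ∧ (∀ w ∈ ball 0 S, ‖g w‖ ≤ B) ∧
      EqOn g p (ball 0 S ∩ (tubeOver Γ ∪ tubeOver {0})) := by
  have hTΓ' : MapsTo T (tubeOver (orthant ι (-1))) (tubeOver {t | -t ∈ Γ}) := fun w hw => by
    have hneg := hTΓ (x := -w) fun j => by
      have hwj : SignType.sign (w j).im = -1 := hw j
      simp [Left.sign_neg, hwj]
    rw [map_neg] at hneg
    exact hneg
  obtain ⟨g, hg, hgB, hgp⟩ := exists_extension_of_orthants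
    (hp.comp_continuousLinearMap T hT hTΓ hT0) (hm.comp_continuousLinearMap T hT hTΓ' hT0)
    fun w hw => heq ⟨hT hw.1, hT0 hw.2⟩
  have hg' : DifferentiableOn ℂ (g ∘ T') (ball 0 S) :=
    hg.comp T'.differentiable.differentiableOn hT'
  have hedge : EqOn (g ∘ T') p (ball 0 S ∩ tubeOver {0}) := fun w hw =>
    (hgp ⟨hT' hw.1, hT0' hw.2⟩).trans (congrArg p (hTT' w))
  refine ⟨_, hg', fun w hw => hgB _ (hT' hw), ?_⟩
  rw [inter_union_distrib_left]
  exact ((hp.mono hSR).eqOn_of_eqOn_edge hΓo hΓ hg' hedge).union hedge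

theorem exists_extension_of_cones [Nonempty ι] [CompleteSpace F] (hΓo : IsOpen Γ)
    (hΓne : Γ.Nonempty) (hΓ : ∀ t ∈ Γ, ∀ c : ℝ, 0 < c → c • t ∈ Γ) :
    ∃ c : ℝ, 0 < c ∧ c ≤ 1 ∧ ∀ {R B : ℝ} {p m : (ι → ℂ) → F}, 0 < R →
      HolomorphicToEdge Γ R B p → HolomorphicToEdge {t | -t ∈ Γ} R B m →
      EqOn p m (ball 0 R ∩ tubeOver {0}) →
      ∃ g, DifferentiableOn ℂ g (ball 0 (c * R)) ∧ (∀ w ∈ ball 0 (c * R), ‖g w‖ ≤ B) ∧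
        EqOn g p (ball 0 (c * R) ∩ (tubeOver Γ ∪ tubeOver {0})) := by
  obtain ⟨A, hAΓ, hA0, hA0'⟩ := exists_continuousLinearEquiv_mapsTo_cone hΓo hΓne hΓ
  set K := ‖(A : (ι → ℂ) →L[ℂ] ι → ℂ)‖ + 1 with hK
  set K' := ‖(A.symm : (ι → ℂ) →L[ℂ] ι → ℂ)‖ + 1 with hK'
  have hK1 : 1 ≤ K := le_add_of_nonneg_left (norm_nonneg _)
  have hK1' : 1 ≤ K' := le_add_of_nonneg_left (norm_nonneg _)
  have hc1 : 1 / (6 * K * K') ≤ 1 := (div_le_one (by positivity)).2 (by nlinarith)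
  refine ⟨1 / (6 * K * K'), by positivity, hc1, fun {R B p m} hR hp hm heq => ?_⟩
  set s := R / (6 * K) with hs
  have hs0 : 0 < s := by positivity
  refine exists_extension_of_mapsTo_orthant (T := s • (A : (ι → ℂ) →L[ℂ] ι → ℂ))
    (T' := s⁻¹ • (A.symm : (ι → ℂ) →L[ℂ] ι → ℂ)) hΓo hΓ (fun w => by simp [hs0.ne'])
    (mapsTo_smul_ball _ hs0 (by rw [← hK, hs]; field_simp))
    (mapsTo_smul_ball _ (inv_pos.2 hs0) (by rw [← hK', hs]; field_simp))
    (fun w hw => smul_mem_tubeOver hΓ (hAΓ hw) hs0) (fun w hw => smul_mem_tubeOver_zero (hA0 hw) s)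
    (fun w hw => smul_mem_tubeOver_zero (hA0' hw) s⁻¹) (mul_le_of_le_one_left hR.le hc1) hp hm heq

end ConeEdge

section PerturbedIdentity

variable {E : Type*} [NormedAddCommGroup E] [NormedSpace ℂ E] {f : E → E} {R : ℝ}

lemma norm_fderiv_le_quarter (hf : DifferentiableOn ℂ f (ball 0 R))
    (hfR : ∀ w ∈ ball 0 R, ‖f w‖ ≤ R / 16) {x : E} (hx : x ∈ ball 0 (R / 2)) :
    ‖fderiv ℂ f x‖ ≤ 1 / 4 := by
  have hx' := mem_ball_zero_iff.1 hx
  have hR : 0 < R := by linarith [norm_nonneg x]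
  have hsub : ball x (R / 2) ⊆ ball 0 R := ball_subset_ball' (by rw [dist_zero_right]; linarith)
  refine (norm_fderiv_le_of_forall_norm_le (half_pos hR) (hf.mono hsub)
    fun y hy => hfR y (hsub hy)).trans_eq ?_
  field_simp
  norm_num

lemma approximatesLinearOn_id_add (hR : 0 < R) (hf : DifferentiableOn ℂ f (ball 0 R))
    (hfR : ∀ w ∈ ball 0 R, ‖f w‖ ≤ R / 16) :
    ApproximatesLinearOn (fun w => w + f w) (ContinuousLinearEquiv.refl ℂ E : E →L[ℂ] E)
      (ball 0 (R / 2)) (1 / 4) := by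
  intro x hx y hy
  have hsub : ball (0 : E) (R / 2) ⊆ ball 0 R := ball_subset_ball (half_le_self hR.le)
  have hlip : ‖f x - f y‖ ≤ 1 / 4 * ‖x - y‖ :=
    (convex_ball 0 (R / 2)).norm_image_sub_le_of_norm_fderiv_le
      (fun w hw => hf.differentiableAt (isOpen_ball.mem_nhds (hsub hw)))
      (fun w hw => norm_fderiv_le_quarter hf hfR hw) hy hx
  calc ‖x + f x - (y + f y) - (x - y)‖ = ‖f x - f y‖ := by congr 1; abel
    _ ≤ _ := by simpa using hlip

lemma ball_subset_image_id_add [CompleteSpace E] (hR : 0 < R)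
    (hf : DifferentiableOn ℂ f (ball 0 R)) (hfR : ∀ w ∈ ball 0 R, ‖f w‖ ≤ R / 16) :
    ball 0 (R / 8) ⊆ (fun w => w + f w) '' ball 0 (R / 2) := by
  intro w hw
  have hsurj := (approximatesLinearOn_id_add hR hf hfR).surjOn_closedBall_of_nonlinearRightInverse
    (ε := R / 4) (b := 0) ⟨id, 1, by simp, by simp⟩ (by positivity)
    (closedBall_subset_ball (by linarith))
  refine image_mono (closedBall_subset_ball (by linarith)) (hsurj (mem_closedBall_iff_norm.2 ?_))
  have hf0 := hfR 0 (mem_ball_self hR)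
  have hw' := mem_ball_zero_iff.1 hw
  push_cast
  calc ‖w - (0 + f 0)‖ ≤ ‖w‖ + ‖f 0‖ := by rw [zero_add]; exact norm_sub_le _ _
    _ ≤ _ := by linarith

lemma exists_hasFDerivAt_equiv_id_add [CompleteSpace E] (hf : DifferentiableOn ℂ f (ball 0 R))
    (hfR : ∀ w ∈ ball 0 R, ‖f w‖ ≤ R / 16) {x : E} (hx : x ∈ ball 0 (R / 2)) :
    ∃ A : E ≃L[ℂ] E, HasFDerivAt (fun w => w + f w) (A : E →L[ℂ] E) x := by
  have hnorm : ‖-fderiv ℂ f x‖ < 1 := by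
    rw [norm_neg]
    exact (norm_fderiv_le_quarter hf hfR hx).trans_lt (by norm_num)
  have hxR : x ∈ ball 0 R := by
    rw [mem_ball_zero_iff] at hx ⊢
    linarith [norm_nonneg x]
  refine ⟨ContinuousLinearEquiv.unitsEquiv ℂ E (Units.oneSub _ hnorm), ?_⟩
  refine ((hasFDerivAt_id x).add
    (hf.differentiableAt (isOpen_ball.mem_nhds hxR)).hasFDerivAt).congr_fderiv ?_
  ext v
  simp

theorem exists_openPartialHomeomorph_id_add [CompleteSpace E] (hR : 0 < R)
    (hf : DifferentiableOn ℂ f (ball 0 R)) (hfR : ∀ w ∈ ball 0 R, ‖f w‖ ≤ R / 16) :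
    ∃ e : OpenPartialHomeomorph E E, (∀ w, e w = w + f w) ∧ e.source = ball 0 (R / 2) ∧
      ball 0 (R / 8) ⊆ e.target ∧ DifferentiableOn ℂ e.symm e.target := by
  have happ := approximatesLinearOn_id_add hR hf hfR
  have hc : Subsingleton E ∨ (1 / 4 : NNReal) <
      ‖((ContinuousLinearEquiv.refl ℂ E).symm : E →L[ℂ] E)‖₊⁻¹ := by
    refine (subsingleton_or_nontrivial E).imp_right fun (_ : Nontrivial E) => ?_
    have hid : ‖((ContinuousLinearEquiv.refl ℂ E).symm : E →L[ℂ] E)‖₊ = 1 :=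
      ContinuousLinearMap.nnnorm_id
    rw [hid, ← NNReal.coe_lt_coe]
    norm_num
  refine ⟨happ.toOpenPartialHomeomorph _ _ hc isOpen_ball, fun _ => rfl, rfl,
    ball_subset_image_id_add hR hf hfR, fun w hw => ?_⟩
  obtain ⟨A, hA⟩ := exists_hasFDerivAt_equiv_id_add hf hfR
    ((happ.toOpenPartialHomeomorph _ _ hc isOpen_ball).map_target hw)
  exact (OpenPartialHomeomorph.hasFDerivAt_symm _ hw hA).differentiableAt.differentiableWithinAt

end PerturbedIdentity

section TaylorCoefficients

variable {F : Type*} [NormedAddCommGroup F] [NormedSpace ℂ F] {u : ℂ → F} {ρ r T B : ℝ}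

lemma cauchyPowerSeries_apply_one (u : ℂ → F) (hρ : ρ ≠ 0) (k : ℕ) :
    cauchyPowerSeries u 0 ρ k (fun _ => 1) =
      Real.circleAverage (fun l => ((ρ * l) ^ k)⁻¹ • u (ρ * l)) 0 1 := by
  have hscale : Real.circleAverage (fun l => ((ρ * l) ^ k)⁻¹ • u (ρ * l)) 0 1 =
      Real.circleAverage (fun l => (l ^ k)⁻¹ • u l) 0 ρ := by
    simp [Real.circleAverage, circleMap]
  rw [hscale, Real.circleAverage_eq_circleIntegral hρ, cauchyPowerSeries_apply]
  simp only [sub_zero, one_div, inv_pow, smul_comm (_ ^ k)⁻¹]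

lemma norm_cauchyPowerSeries_apply_one_le (hρ : 0 < ρ) (hB : ∀ l, ‖l‖ = ρ → ‖u l‖ ≤ B) (k : ℕ) :
    ‖cauchyPowerSeries u 0 ρ k (fun _ => 1)‖ ≤ B * (ρ ^ k)⁻¹ := by
  rw [cauchyPowerSeries_apply_one u hρ.ne']
  refine norm_circleAverage_le fun l hl => ?_
  have hl1 : ‖(ρ : ℂ) * l‖ = ρ := by
    have : ‖l‖ = 1 := by simpa using hl
    rw [norm_mul, this, mul_one, norm_real, Real.norm_of_nonneg hρ.le]
  rw [norm_smul, norm_inv, norm_pow, hl1, mul_comm]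
  gcongr
  exact hB _ hl1

lemma hasFPowerSeriesOnBall_cauchyPowerSeries [CompleteSpace F]
    (hu : DifferentiableOn ℂ u (ball 0 T)) (hρ : 0 < ρ) (hρT : ρ < T) :
    HasFPowerSeriesOnBall u (cauchyPowerSeries u 0 ρ) 0 (ENNReal.ofReal ρ) := by
  lift ρ to NNReal using hρ.le
  rw [ENNReal.ofReal_coe_nnreal]
  exact (hu.mono (closedBall_subset_ball hρT)).hasFPowerSeriesOnBall (mod_cast hρ)

lemma cauchyPowerSeries_eq_of_lt [CompleteSpace F] (hu : DifferentiableOn ℂ u (ball 0 T))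
    (hρ : 0 < ρ) (hρT : ρ < T) (hr : 0 < r) (hrT : r < T) :
    cauchyPowerSeries u 0 ρ = cauchyPowerSeries u 0 r :=
  (hasFPowerSeriesOnBall_cauchyPowerSeries hu hρ hρT).hasFPowerSeriesAt.eq_formalMultilinearSeries
    (hasFPowerSeriesOnBall_cauchyPowerSeries hu hr hrT).hasFPowerSeriesAt

lemma hasSum_cauchyPowerSeries_apply_one [CompleteSpace F] (hu : DifferentiableOn ℂ u (ball 0 T))
    (hT : 1 < T) (hρ : 0 < ρ) (hρT : ρ < T) :
    HasSum (fun k => cauchyPowerSeries u 0 ρ k fun _ => 1) (u 1) := by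
  obtain ⟨r, hr1, hrT⟩ := exists_between hT
  rw [cauchyPowerSeries_eq_of_lt hu hρ hρT (one_pos.trans hr1) hrT]
  simpa using (hasFPowerSeriesOnBall_cauchyPowerSeries hu (one_pos.trans hr1) hrT).hasSum
    (y := 1) (by simpa using hr1)

end TaylorCoefficients

section Hartogs

variable {X Y F : Type*} [NormedAddCommGroup Y] [NormedSpace ℂ Y] [NormedAddCommGroup F]
  {G : X × Y → F} {U : Set X} {w₀ : Y} {R r η B : ℝ}

/-- The restriction of `G` to the complex line `ζ ↦ (z, w₀ + ζ (w - w₀))`, for `q = (z, w)`. -/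
def radialSlice (G : X × Y → F) (w₀ : Y) (q : X × Y) (ζ : ℂ) : F := G (q.1, w₀ + ζ • (q.2 - w₀))

lemma add_smul_sub_mem_ball {w : Y} {ζ : ℂ} (hw : w ∈ ball w₀ r) (hR : 0 < R) (hζ : ‖ζ‖ * r ≤ R) :
    w₀ + ζ • (w - w₀) ∈ ball w₀ R := by
  rw [mem_ball_iff_norm] at hw ⊢
  rw [add_sub_cancel_left, norm_smul]
  rcases eq_or_ne ζ 0 with rfl | hζ0
  · simpa using hR
  · exact (mul_lt_mul_of_pos_left hw (norm_pos_iff.2 hζ0)).trans_le hζ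

lemma norm_mul_le_of_mem_ball_div {ζ : ℂ} (hr : 0 < r) (hζ : ζ ∈ ball 0 (R / r)) :
    ‖ζ‖ * r ≤ R := by
  rw [mem_ball_zero_iff, lt_div_iff₀ hr] at hζ
  exact hζ.le

lemma norm_radialSlice_le (hr : 0 < r) (hR : 0 < R)
    (hB : ∀ z ∈ U, ∀ w ∈ ball w₀ R, ‖G (z, w)‖ ≤ B) {q : X × Y} (hq : q ∈ U ×ˢ ball w₀ r) {ζ : ℂ}
    (hζ : ζ ∈ ball 0 (R / r)) : ‖radialSlice G w₀ q ζ‖ ≤ B :=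
  hB _ hq.1 _ (add_smul_sub_mem_ball hq.2 hR (norm_mul_le_of_mem_ball_div hr hζ))

variable [NormedSpace ℂ F]

lemma differentiableOn_radialSlice (hr : 0 < r) (hR : 0 < R)
    (hslice : ∀ z ∈ U, DifferentiableOn ℂ (fun w => G (z, w)) (ball w₀ R)) {q : X × Y}
    (hq : q ∈ U ×ˢ ball w₀ r) : DifferentiableOn ℂ (radialSlice G w₀ q) (ball 0 (R / r)) :=
  (hslice q.1 hq.1).comp (by fun_prop)
    fun _ hζ => add_smul_sub_mem_ball hq.2 hR (norm_mul_le_of_mem_ball_div hr hζ)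

variable [NormedAddCommGroup X] [NormedSpace ℂ X] [FiniteDimensional ℂ X] [FiniteDimensional ℂ Y]

lemma differentiableOn_cauchyPowerSeries_radialSlice (hU : IsOpen U) (hr : 0 < r) (hR : 0 < R)
    (hη : 0 < η) (hslice : ∀ z ∈ U, DifferentiableOn ℂ (fun w => G (z, w)) (ball w₀ R))
    (hB : ∀ z ∈ U, ∀ w ∈ ball w₀ R, ‖G (z, w)‖ ≤ B) (hG : DifferentiableOn ℂ G (U ×ˢ ball w₀ η))
    {ρ : ℝ} (hρ : 0 < ρ) (hρR : ρ < R / r) (hρη : ρ * r ≤ η) (k : ℕ) :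
    DifferentiableOn ℂ (fun q => cauchyPowerSeries (radialSlice G w₀ q) 0 ρ k fun _ => 1)
      (U ×ˢ ball w₀ r) := by
  have hnorm : ∀ {l : ℂ}, ‖l‖ = 1 → ‖(ρ : ℂ) * l‖ = ρ := fun {l} hl => by
    rw [norm_mul, hl, mul_one, norm_real, Real.norm_of_nonneg hρ.le]
  have hmem : ∀ {l : ℂ}, ‖l‖ = 1 → (ρ : ℂ) * l ∈ ball 0 (R / r) := fun hl => by
    rwa [mem_ball_zero_iff, hnorm hl]
  simp only [cauchyPowerSeries_apply_one _ hρ.ne']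
  refine differentiableOn_circleAverage (B := (ρ ^ k)⁻¹ * B) (hU.prod isOpen_ball)
    (fun q hq => ?_) (fun l hl _ => ?_) fun q hq l hl => ?_
  · have hmaps : MapsTo (fun l : ℂ => (ρ : ℂ) * l) (sphere 0 1) (ball 0 (R / r)) :=
      fun l hl => hmem (mem_sphere_zero_iff_norm.1 hl)
    refine ContinuousOn.smul (ContinuousOn.inv₀ (by fun_prop) fun l hl => ?_)
      ((differentiableOn_radialSlice hr hR hslice hq).continuousOn.comp (by fun_prop) hmaps)
    exact pow_ne_zero k (mul_ne_zero (ofReal_ne_zero.2 hρ.ne') (ne_zero_of_mem_unit_sphere ⟨l, hl⟩))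
  · refine DifferentiableOn.const_smul (hG.comp (by fun_prop) fun q hq => ?_) _
    exact ⟨hq.1, add_smul_sub_mem_ball hq.2 hη (by rwa [hnorm hl])⟩
  · rw [norm_smul, norm_inv, norm_pow, hnorm hl]
    gcongr
    exact norm_radialSlice_le hr hR hB hq (hmem hl)

theorem differentiableOn_prod_ball_of_slices [CompleteSpace F] (hU : IsOpen U) (hη : 0 < η)
    (hslice : ∀ z ∈ U, DifferentiableOn ℂ (fun w => G (z, w)) (ball w₀ R))
    (hB : ∀ z ∈ U, ∀ w ∈ ball w₀ R, ‖G (z, w)‖ ≤ B) (hG : DifferentiableOn ℂ G (U ×ˢ ball w₀ η)) :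
    DifferentiableOn ℂ G (U ×ˢ ball w₀ R) := by
  intro p hp
  have hR : 0 < R := pos_of_mem_ball hp.2
  obtain ⟨r, hpr, hrR⟩ := exists_between (mem_ball.1 hp.2)
  have hr : 0 < r := dist_nonneg.trans_lt hpr
  have hT : 1 < R / r := (one_lt_div hr).2 hrR
  obtain ⟨t, ht1, htT⟩ := exists_between hT
  set ρ := min 1 (η / r)
  have hρ : 0 < ρ := lt_min one_pos (div_pos hη hr)
  have hρT : ρ < R / r := (min_le_left _ _).trans_lt hT
  have hρη : ρ * r ≤ η := (le_div_iff₀ hr).1 (min_le_right _ _)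
  have hopen : IsOpen (U ×ˢ ball w₀ r) := hU.prod isOpen_ball
  have hsum : EqOn G (fun q => ∑' k, cauchyPowerSeries (radialSlice G w₀ q) 0 ρ k fun _ => 1)
      (U ×ˢ ball w₀ r) := fun q hq => by
    simpa [radialSlice] using (hasSum_cauchyPowerSeries_apply_one
      (differentiableOn_radialSlice hr hR hslice hq) hT hρ hρT).tsum_eq.symm
  refine (DifferentiableOn.congr ?_ hsum).differentiableAt (hopen.mem_nhds ⟨hp.1, hpr⟩)
    |>.differentiableWithinAt
  refine differentiableOn_tsum_of_dominated (g := fun k => B * (t ^ k)⁻¹) hopen (fun k =>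
    differentiableOn_cauchyPowerSeries_radialSlice hU hr hR hη hslice hB hG hρ hρT hρη k)
    ?_ fun k q hq => ?_
  · simp only [← inv_pow]
    exact (summable_geometric_of_lt_one (by positivity) (inv_lt_one_of_one_lt₀ ht1)).mul_left B
  · have ht0 := one_pos.trans ht1
    rw [cauchyPowerSeries_eq_of_lt (differentiableOn_radialSlice hr hR hslice hq) hρ hρT ht0 htT]
    exact norm_cauchyPowerSeries_apply_one_le ht0 (fun l hl => norm_radialSlice_le hr hR hB hq
      (by rwa [mem_ball_zero_iff, hl])) k

end Hartogs

section CurvedCones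

variable {ι F : Type*} [Fintype ι] [NormedAddCommGroup F] [NormedSpace ℂ F] {Γ : Set (ι → ℝ)}

theorem exists_extension_of_curved_cones [Nonempty ι] [CompleteSpace F] (hΓo : IsOpen Γ)
    (hΓne : Γ.Nonempty) (hΓ : ∀ t ∈ Γ, ∀ c : ℝ, 0 < c → c • t ∈ Γ) :
    ∃ c : ℝ, 0 < c ∧ c ≤ 1 ∧ ∀ {R B : ℝ} {p m : (ι → ℂ) → F} {f : (ι → ℂ) → ι → ℂ}, 0 < R →
      DifferentiableOn ℂ f (ball 0 R) → (∀ w ∈ ball 0 (c * R), ‖f w‖ ≤ c * R / 16) →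
      HolomorphicToEdge Γ R B (fun w => p (w + f w)) →
      HolomorphicToEdge {t | -t ∈ Γ} R B (fun w => m (w + f w)) →
      (∀ w ∈ ball 0 R ∩ tubeOver {0}, p (w + f w) = m (w + f w)) →
      ∃ g, DifferentiableOn ℂ g (ball 0 (c * R / 8)) ∧ (∀ ω ∈ ball 0 (c * R / 8), ‖g ω‖ ≤ B) ∧
        ∀ w ∈ ball 0 (c * R / 2) ∩ (tubeOver Γ ∪ tubeOver {0}),
          g (w + f w) = p (w + f w) := by
  obtain ⟨c, hc0, hc1, hc⟩ := exists_extension_of_cones (F := F) hΓo hΓne hΓ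
  refine ⟨c, hc0, hc1, fun {R B p m f} hR hf hfR hp hm hpm => ?_⟩
  have hcR : 0 < c * R := mul_pos hc0 hR
  obtain ⟨g, hg, hgB, hgp⟩ := hc hR hp hm hpm
  obtain ⟨e, he, hsource, htarget, hesymm⟩ := exists_openPartialHomeomorph_id_add hcR
    (hf.mono (ball_subset_ball (mul_le_of_le_one_left hR.le hc1))) hfR
  have hhalf : ball (0 : ι → ℂ) (c * R / 2) ⊆ ball 0 (c * R) :=
    ball_subset_ball (half_le_self hcR.le)
  have hmaps : MapsTo e.symm (ball 0 (c * R / 8)) (ball 0 (c * R)) := fun ω hω =>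
    hhalf (hsource ▸ e.map_target (htarget hω))
  refine ⟨g ∘ e.symm, hg.comp (hesymm.mono htarget) hmaps, fun ω hω => hgB _ (hmaps hω),
    fun w hw => ?_⟩
  have hleft : e.symm (w + f w) = w := by rw [← he, e.left_inv (hsource ▸ hw.1)]
  rw [Function.comp_apply, hleft]
  exact hgp ⟨hhalf hw.1, hw.2⟩

end CurvedCones

section LineExtension

variable {E : Type*} [NormedAddCommGroup E] [NormedSpace ℝ E] {x y : E}

/-- The value at `x + ζ y`, with `ζ` complex, of the homogeneous polynomial `v ↦ p (v, …, v)`,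
obtained by expanding `p (x + ζ y, …, x + ζ y)` multilinearly. -/
def complexLineEval {k : ℕ} (p : E [×k]→L[ℝ] ℝ) (x y : E) (ζ : ℂ) : ℂ :=
  ∑ s : Finset (Fin k), ζ ^ (k - s.card) * (p (s.piecewise (fun _ => x) fun _ => y) : ℝ)

lemma norm_complexLineEval_le {k : ℕ} (p : E [×k]→L[ℝ] ℝ) (x y : E) (ζ : ℂ) :
    ‖complexLineEval p x y ζ‖ ≤ ‖p‖ * (‖x‖ + ‖ζ‖ * ‖y‖) ^ k := by
  rw [← Fin.sum_pow_mul_eq_add_pow ‖x‖ (‖ζ‖ * ‖y‖), Finset.mul_sum]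
  refine norm_sum_le_of_le _ fun s _ => ?_
  have hprod : ∏ i, ‖s.piecewise (fun _ => x) (fun _ => y) i‖ =
      ‖x‖ ^ s.card * ‖y‖ ^ (k - s.card) := by
    simp only [Finset.piecewise, apply_ite norm]
    simp [Finset.prod_ite, Finset.card_compl, ← Finset.compl_filter]
  rw [norm_mul, norm_pow, norm_real]
  calc ‖ζ‖ ^ (k - s.card) * ‖p (s.piecewise (fun _ => x) fun _ => y)‖
      ≤ ‖ζ‖ ^ (k - s.card) * (‖p‖ * (‖x‖ ^ s.card * ‖y‖ ^ (k - s.card))) := by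
        rw [← hprod]
        gcongr
        exact p.le_opNorm _
    _ = ‖p‖ * (‖x‖ ^ s.card * (‖ζ‖ * ‖y‖) ^ (k - s.card)) := by rw [mul_pow]; ring

lemma complexLineEval_ofReal {k : ℕ} (p : E [×k]→L[ℝ] ℝ) (x y : E) (τ : ℝ) :
    complexLineEval p x y τ = (p fun _ => x + τ • y : ℝ) := by
  have hexpand : (p fun _ => x + τ • y) =
      ∑ s : Finset (Fin k), p (s.piecewise (fun _ => x) fun _ => τ • y) :=
    p.toMultilinearMap.map_add_univ (fun _ => x) fun _ => τ • y
  have hsmul : ∀ s : Finset (Fin k), p (s.piecewise (fun _ => x) fun _ => τ • y) =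
      τ ^ (k - s.card) * p (s.piecewise (fun _ => x) fun _ => y) := fun s => by
    have hpiece : s.piecewise (fun _ => x) (fun _ => τ • y) = sᶜ.piecewise
        (fun i => τ • s.piecewise (fun _ => x) (fun _ => y) i)
        (s.piecewise (fun _ => x) fun _ => y) := by
      ext i
      by_cases hi : i ∈ s <;> simp [hi]
    rw [hpiece]
    simpa [Finset.card_compl] using
      p.toMultilinearMap.map_piecewise_smul (fun _ => τ) (s.piecewise (fun _ => x) fun _ => y) sᶜ
  simp only [complexLineEval, hexpand, hsmul]
  push_cast
  rfl

lemma differentiable_complexLineEval {k : ℕ} (p : E [×k]→L[ℝ] ℝ) (x y : E) :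
    Differentiable ℂ (complexLineEval p x y) := by
  unfold complexLineEval
  fun_prop

variable {P : FormalMultilinearSeries ℝ E ℝ} {r : ℝ}

/-- The extension to complex `ζ` of `τ ↦ f (x + τ y)`, for `f` real-analytic with power series `P`
at the origin. -/
def lineExtension (P : FormalMultilinearSeries ℝ E ℝ) (x y : E) (ζ : ℂ) : ℂ :=
  ∑' k, complexLineEval (P k) x y ζ

lemma lineExtension_ofReal {f : E → ℝ} {R : ENNReal} (hf : HasFPowerSeriesOnBall f P 0 R) {τ : ℝ}
    (hτ : x + τ • y ∈ eball 0 R) : lineExtension P x y τ = f (x + τ • y) := by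
  simp only [lineExtension, complexLineEval_ofReal]
  simpa using (hasSum_ofReal.2 (hf.hasSum hτ)).tsum_eq

lemma differentiableOn_lineExtension (hP : Summable fun k => ‖P k‖ * r ^ k) {T : ℝ}
    (hr : ‖x‖ + T * ‖y‖ ≤ r) : DifferentiableOn ℂ (lineExtension P x y) (ball 0 T) := by
  refine differentiableOn_tsum_of_summable_norm hP
    (fun k => (differentiable_complexLineEval (P k) x y).differentiableOn) isOpen_ball
    fun k ζ hζ => (norm_complexLineEval_le (P k) x y ζ).trans ?_
  have hζT := (mem_ball_zero_iff.1 hζ).le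
  gcongr
  exact (add_le_add_right (mul_le_mul_of_nonneg_right hζT (norm_nonneg y)) _).trans hr

lemma norm_lineExtension_le (hP : Summable fun k => ‖P k‖ * r ^ k) (hP0 : P 0 = 0) (hP1 : P 1 = 0)
    (hr : 0 < r) {ζ : ℂ} (hζ : ‖x‖ + ‖ζ‖ * ‖y‖ ≤ r) :
    ‖lineExtension P x y ζ‖ ≤ (∑' k, ‖P k‖ * r ^ k) * ((‖x‖ + ‖ζ‖ * ‖y‖) / r) ^ 2 := by
  refine tsum_of_norm_bounded (hP.hasSum.mul_right _) fun k => ?_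
  refine (norm_complexLineEval_le (P k) x y ζ).trans ?_
  match k with
  | 0 => simp [hP0]
  | 1 => simp [hP1]
  | k + 2 =>
    calc ‖P (k + 2)‖ * (‖x‖ + ‖ζ‖ * ‖y‖) ^ (k + 2)
        ≤ ‖P (k + 2)‖ * (r ^ k * (‖x‖ + ‖ζ‖ * ‖y‖) ^ 2) := by rw [pow_add]; gcongr
      _ = ‖P (k + 2)‖ * r ^ (k + 2) * ((‖x‖ + ‖ζ‖ * ‖y‖) / r) ^ 2 := by field_simp; ring

lemma coeff_one_eq_zero_of_fderiv_eq_zero {f : E → ℝ} (hf : HasFPowerSeriesAt f P 0)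
    (h1 : fderiv ℝ f 0 = 0) : P 1 = 0 := by
  apply (continuousMultilinearCurryFin1 ℝ E ℝ).injective
  rw [← hf.fderiv_eq, h1, map_zero]

end LineExtension

section PartialComplexification

variable {X ι : Type*} [NormedAddCommGroup X] [Fintype ι]

lemma norm_re_pi_le (w : ι → ℂ) : ‖fun k => (w k).re‖ ≤ ‖w‖ :=
  (pi_norm_le_iff_of_nonneg (norm_nonneg w)).2 fun k =>
    (abs_re_le_norm _).trans (norm_le_pi_norm w k)

lemma norm_im_pi_le (w : ι → ℂ) : ‖fun k => (w k).im‖ ≤ ‖w‖ :=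
  (pi_norm_le_iff_of_nonneg (norm_nonneg w)).2 fun k =>
    (abs_im_le_norm _).trans (norm_le_pi_norm w k)

lemma norm_imLine_le (w : ι → ℂ) (ζ : ℂ) : ‖imLine w ζ‖ ≤ (1 + ‖ζ‖) * ‖w‖ := by
  refine (pi_norm_le_iff_of_nonneg (by positivity)).2 fun j => (norm_add_le _ _).trans ?_
  rw [norm_mul, norm_real, norm_real, add_mul, one_mul]
  gcongr
  · exact (abs_re_le_norm _).trans (norm_le_pi_norm w j)
  · exact (abs_im_le_norm _).trans (norm_le_pi_norm w j)

lemma norm_mk_re_le (q : X × (ι → ℂ)) : ‖(q.1, fun k => (q.2 k).re)‖ ≤ ‖q‖ :=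
  max_le_max le_rfl (norm_re_pi_le q.2)

lemma norm_mk_im_le (q : X × (ι → ℂ)) : ‖((0 : X), fun k => (q.2 k).im)‖ ≤ ‖q‖ :=
  max_le_max (by simp) (norm_im_pi_le q.2)

variable [NormedSpace ℝ X] {φ : X × (ι → ℝ) → ℝ} {φhat : X × (ι → ℂ) → ℂ}

lemma eq_lineExtension {P : FormalMultilinearSeries ℝ (X × (ι → ℝ)) ℝ} {R : ENNReal} {δ : ℝ}
    (hP : HasFPowerSeriesOnBall φ P 0 R) (hδR : ENNReal.ofReal δ ≤ R)
    (hsum : Summable fun k => ‖P k‖ * δ ^ k)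
    (hreal : ∀ p ∈ ball 0 δ, φhat (p.1, fun k => (p.2 k : ℂ)) = φ p)
    (hhol : ∀ q ∈ ball (0 : X × (ι → ℂ)) δ, DifferentiableAt ℂ (fun w => φhat (q.1, w)) q.2)
    {q : X × (ι → ℂ)} (hq : 3 * ‖q‖ < δ) :
    φhat q = lineExtension P (q.1, fun k => (q.2 k).re) (0, fun k => (q.2 k).im) I := by
  have hx := norm_mk_re_le q
  have hy := norm_mk_im_le q
  set x : X × (ι → ℝ) := (q.1, fun k => (q.2 k).re) with hx_def
  set y : X × (ι → ℝ) := (0, fun k => (q.2 k).im) with hy_def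
  suffices EqOn (fun ζ => φhat (q.1, imLine q.2 ζ)) (lineExtension P x y) (ball 0 2) by
    simpa [imLine_I] using this (show I ∈ ball 0 2 by simp)
  refine eqOn_of_eventually_eq_ofReal (fun ζ hζ => ?_)
    (differentiableOn_lineExtension hsum (by linarith)) isOpen_ball
    (convex_ball 0 2).isPreconnected (by simp) ?_
  · have hmem : (q.1, imLine q.2 ζ) ∈ ball 0 δ := by
      refine mem_ball_zero_iff.2 (lt_of_le_of_lt (max_le ?_ ?_) hq)
      · linarith [norm_fst_le q, norm_nonneg q]
      · refine (norm_imLine_le q.2 ζ).trans ?_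
        gcongr
        · linarith [mem_ball_zero_iff.1 hζ]
        · exact norm_snd_le q
    exact ((hhol _ hmem).comp ζ (differentiable_imLine q.2 ζ)).differentiableWithinAt
  · filter_upwards [ball_mem_nhds (0 : ℝ) two_pos] with τ hτ
    have hτ2 : ‖τ‖ < 2 := mem_ball_zero_iff.1 hτ
    have hnorm : ‖x + τ • y‖ < δ := by
      calc ‖x + τ • y‖ ≤ ‖x‖ + ‖τ‖ * ‖y‖ := norm_smul τ y ▸ norm_add_le _ _
        _ ≤ ‖q‖ + 2 * ‖q‖ := by gcongr
        _ < δ := by linarith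
    rw [lineExtension_ofReal hP, ← hreal (x + τ • y) (mem_ball_zero_iff.2 hnorm)]
    · have hline : imLine q.2 τ = fun k => (((x + τ • y).2 k : ℝ) : ℂ) := by
        funext k
        simp [hx_def, hy_def, imLine]
      simp [hline, hx_def, hy_def]
    · exact eball_subset_eball hδR (by rwa [eball_ofReal, mem_ball_zero_iff])

theorem isBigO_norm_sq_of_eq_ofReal (hφ : AnalyticAt ℝ φ 0) (hφ0 : φ 0 = 0)
    (hdφ0 : fderiv ℝ φ 0 = 0)
    (hreal : ∀ᶠ p in 𝓝 (0 : X × (ι → ℝ)), φhat (p.1, fun k => (p.2 k : ℂ)) = φ p)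
    (hhol : ∀ᶠ q in 𝓝 (0 : X × (ι → ℂ)), DifferentiableAt ℂ (fun w => φhat (q.1, w)) q.2) :
    φhat =O[𝓝 0] fun q => ‖q‖ ^ 2 := by
  obtain ⟨P, R, hP⟩ := hφ
  obtain ⟨δ₁, hδ₁, hreal⟩ := Metric.eventually_nhds_iff_ball.1 hreal
  obtain ⟨δ₂, hδ₂, hhol⟩ := Metric.eventually_nhds_iff_ball.1 hhol
  obtain ⟨δ, hδ, hδR⟩ := ENNReal.lt_iff_exists_nnreal_btwn.1
    (lt_min hP.r_pos (ENNReal.ofReal_pos.2 (lt_min hδ₁ hδ₂)))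
  obtain ⟨hδR, hδ12⟩ := lt_min_iff.1 hδR
  replace hδ12 : (δ : ℝ) < min δ₁ δ₂ := ENNReal.coe_lt_ofReal.1 hδ12
  have hδ0 : (0 : ℝ) < δ := mod_cast hδ
  have hsum : Summable fun k => ‖P k‖ * (δ : ℝ) ^ k :=
    P.summable_norm_mul_pow (hδR.trans_le hP.r_le)
  have hP0 : P 0 = 0 := by
    ext v
    rw [hP.coeff_zero, hφ0]
    rfl
  refine .of_bound ((∑' k, ‖P k‖ * (δ : ℝ) ^ k) * (2 / δ) ^ 2) ?_
  filter_upwards [ball_mem_nhds 0 (show 0 < (δ : ℝ) / 3 by positivity)] with q hq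
  have hq3 : 3 * ‖q‖ < δ := by linarith [mem_ball_zero_iff.1 hq]
  have hx := norm_mk_re_le q
  have hy := norm_mk_im_le q
  rw [eq_lineExtension hP (by simpa using hδR.le) hsum
    (fun p hp => hreal p (ball_subset_ball (hδ12.le.trans (min_le_left _ _)) hp))
    (fun p hp => hhol p (ball_subset_ball (hδ12.le.trans (min_le_right _ _)) hp)) hq3]
  refine (norm_lineExtension_le hsum hP0 (coeff_one_eq_zero_of_fderiv_eq_zero
    hP.hasFPowerSeriesAt hdφ0) hδ0 (by rw [norm_I]; linarith [norm_nonneg q])).trans ?_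
  rw [norm_I, one_mul, norm_pow, norm_norm, mul_assoc, ← mul_pow, div_mul_eq_mul_div]
  gcongr
  linarith

end PartialComplexification

section WedgeFamilies

variable {n d : ℕ} {φ : Dom n d → Fin d → ℝ} {φhat : Amb n d → Fin d → ℂ} {Γ : Set (Fin d → ℝ)}
  {h : Dom n d → ℂ} {F : Amb n d → ℂ} {R B : ℝ}

/-- The map `(z, w) ↦ (z, w + iφ̂(z,z̄,w))`, that is `PsiW` with `s + it` written as one complex
variable `w`. -/
def complexPsi (φhat : Amb n d → Fin d → ℂ) (q : Amb n d) : Amb n d := (q.1, q.2 + I • φhat q)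

lemma PsiW_re_im (φhat : Amb n d → Fin d → ℂ) (q : Amb n d) :
    PsiW φhat (q.1, (fun k => (q.2 k).re), fun k => (q.2 k).im) = complexPsi φhat q := by
  have hw : (fun k => ((q.2 k).re : ℂ) + I * (q.2 k).im) = q.2 := by
    funext k
    rw [mul_comm, re_add_im]
  simp only [PsiW, funext_iff.1 hw]
  rfl

lemma complexPsi_mem_image_wedgeSet {q : Amb n d} (hq : q ∈ ball 0 R) (hΓ : q.2 ∈ tubeOver Γ) :
    complexPsi φhat q ∈ PsiW φhat '' WedgeSet Γ R := by
  have hqR := mem_ball_zero_iff.1 hq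
  have hw := (norm_snd_le q).trans_lt hqR
  exact ⟨(q.1, (fun k => (q.2 k).re), fun k => (q.2 k).im),
    ⟨(norm_fst_le q).trans_lt hqR, (norm_re_pi_le q.2).trans_lt hw,
      (norm_im_pi_le q.2).trans_lt hw, hΓ⟩, PsiW_re_im φhat q⟩

lemma complexPsi_ofReal {p : Dom n d}
    (hp : φhat (p.1, fun k => (p.2 k : ℂ)) = fun k => ((φ p k : ℝ) : ℂ)) :
    complexPsi φhat (p.1, fun k => (p.2 k : ℂ)) = iotaM φ p := by
  rw [complexPsi, hp]
  rfl

lemma eventually_forall_mem_ball {E : Type*} [NormedAddCommGroup E] {P : E → Prop}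
    (hP : ∀ᶠ q in 𝓝 0, P q) : ∀ᶠ R in 𝓝[>] (0 : ℝ), ∀ q ∈ ball 0 R, P q := by
  obtain ⟨ε, hε, hP⟩ := Metric.eventually_nhds_iff_ball.1 hP
  filter_upwards [Ioc_mem_nhdsGT hε] with R hR q hq using hP q (ball_subset_ball hR.2 hq)

lemma mk_mem_ball {z : Fin n → ℂ} {w : Fin d → ℂ} (hz : z ∈ ball 0 R) (hw : w ∈ ball 0 R) :
    ((z, w) : Amb n d) ∈ ball 0 R := by
  rw [← Prod.mk_zero_zero, ← ball_prod_same]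
  exact ⟨hz, hw⟩

lemma complexPsi_of_mem_edge
    (hreal : ∀ p ∈ ball (0 : Dom n d) R,
      φhat (p.1, fun k => (p.2 k : ℂ)) = fun k => ((φ p k : ℝ) : ℂ))
    {q : Amb n d} (hq : q ∈ ball 0 R) (h0 : q.2 ∈ tubeOver {0}) :
    complexPsi φhat q = iotaM φ (q.1, fun k => (q.2 k).re) := by
  have hre : (fun k => ((q.2 k).re : ℂ)) = q.2 := funext fun k =>
    Complex.ext rfl (mem_tubeOver_zero.1 h0 k).symm
  rw [← complexPsi_ofReal (hreal _ (mem_ball_zero_iff.2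
    ((norm_mk_re_le q).trans_lt (mem_ball_zero_iff.1 hq)))), hre]

lemma differentiableOn_complexPsi_mk
    (hhol : ∀ q ∈ ball (0 : Amb n d) R, DifferentiableAt ℂ (fun w => φhat (q.1, w)) q.2)
    {z : Fin n → ℂ} (hz : z ∈ ball 0 R) :
    DifferentiableOn ℂ (fun w => complexPsi φhat (z, w)) (ball 0 R) := fun w hw =>
  ((differentiableAt_const z).prodMk (differentiableAt_id.add
    ((hhol (z, w) (mk_mem_ball hz hw)).const_smul I))).differentiableWithinAt

/-- `F` is the extension of `h` to the wedge `W_Γ`, seen as a family of functions of `w` depending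
on `z`, at scale `R` and with uniform bound `B`. -/
structure IsWedgeFamily (φhat : Amb n d → Fin d → ℂ) (Γ : Set (Fin d → ℝ)) (h : Dom n d → ℂ)
    (R B : ℝ) (F : Amb n d → ℂ) : Prop where
  differentiableOn : DifferentiableOn ℂ F (complexPsi φhat '' (ball 0 R ∩ Prod.snd ⁻¹' tubeOver Γ))
  holomorphicToEdge : ∀ z ∈ ball 0 R, HolomorphicToEdge Γ R B fun w => F (complexPsi φhat (z, w))
  eq_of_mem_edge : ∀ q ∈ ball 0 R, q.2 ∈ tubeOver {0} →
    F (complexPsi φhat q) = h (q.1, fun k => (q.2 k).re)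

lemma ExtendsToWedge.exists_norm_le (hext : ExtendsToWedge φ φhat Γ h)
    (hlim : Tendsto (complexPsi φhat) (𝓝 0) (𝓝 (iotaM φ 0))) :
    ∃ ε > (0 : ℝ), ∃ F : Amb n d → ℂ, DifferentiableOn ℂ F (PsiW φhat '' WedgeSet Γ ε) ∧
      ∃ S, ContinuousOn F S ∧ PsiW φhat '' WedgeSet Γ ε ⊆ S ∧
        (∀ p ∈ ball 0 ε, iotaM φ p ∈ S ∧ F (iotaM φ p) = h p) ∧
        ∀ᶠ q in 𝓝 0, complexPsi φhat q ∈ S → ‖F (complexPsi φhat q)‖ ≤ ‖h 0‖ + 1 := by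
  obtain ⟨ε, hε, F, hF, hFc, hFh⟩ := hext
  have hmem : ∀ p ∈ ball (0 : Dom n d) ε, ‖p.1‖ < ε ∧ ‖p.2‖ < ε := fun p hp =>
    max_lt_iff.1 (mem_ball_zero_iff.1 hp)
  have hFι : ∀ p ∈ ball (0 : Dom n d) ε, F (iotaM φ p) = h p := fun p hp =>
    hFh p (hmem p hp).1 (hmem p hp).2
  refine ⟨ε, hε, F, hF, _, hFc, subset_union_left, fun p hp => ⟨.inr ⟨p, hmem p hp, rfl⟩,
    hFι p hp⟩, ?_⟩
  have h0 : (0 : Dom n d) ∈ ball 0 ε := mem_ball_self hε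
  have hF0 := (hFc _ (.inr ⟨0, hmem 0 h0, rfl⟩)).norm.eventually_lt_const
    (show ‖F (iotaM φ 0)‖ < ‖h 0‖ + 1 from hFι 0 h0 ▸ lt_add_one _)
  exact (hlim.eventually (eventually_nhdsWithin_iff.1 hF0)).mono fun q hq hqS => (hq hqS).le

theorem ExtendsToWedge.exists_isWedgeFamily (hext : ExtendsToWedge φ φhat Γ h)
    (hlim : Tendsto (complexPsi φhat) (𝓝 0) (𝓝 (iotaM φ 0)))
    (hreal : ∀ᶠ p in 𝓝 (0 : Dom n d),
      φhat (p.1, fun k => (p.2 k : ℂ)) = fun k => ((φ p k : ℝ) : ℂ))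
    (hhol : ∀ᶠ q in 𝓝 (0 : Amb n d), DifferentiableAt ℂ (fun w => φhat (q.1, w)) q.2) :
    ∃ F, ∀ᶠ R in 𝓝[>] 0, IsWedgeFamily φhat Γ h R (‖h 0‖ + 1) F := by
  obtain ⟨ε, hε, F, hF, S, hFc, hΓS, hFι, hbound⟩ := hext.exists_norm_le hlim
  refine ⟨F, ?_⟩
  filter_upwards [Ioc_mem_nhdsGT hε, eventually_forall_mem_ball hbound,
    eventually_forall_mem_ball hreal, eventually_forall_mem_ball hhol]
    with R hR hbound hreal hhol
  have hwedge : MapsTo (complexPsi φhat) (ball 0 R ∩ Prod.snd ⁻¹' tubeOver Γ)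
      (PsiW φhat '' WedgeSet Γ ε) := fun q hq =>
    complexPsi_mem_image_wedgeSet (ball_subset_ball hR.2 hq.1) hq.2
  have hedge : ∀ q ∈ ball 0 R, q.2 ∈ tubeOver {0} →
      complexPsi φhat q ∈ S ∧ F (complexPsi φhat q) = h (q.1, fun k => (q.2 k).re) := by
    intro q hq h0
    rw [complexPsi_of_mem_edge hreal hq h0]
    exact hFι _ (mem_ball_zero_iff.2 ((norm_mk_re_le q).trans_lt
      ((mem_ball_zero_iff.1 hq).trans_le hR.2)))
  have hmem : ∀ q ∈ ball 0 R, q.2 ∈ tubeOver Γ ∪ tubeOver {0} → complexPsi φhat q ∈ S := by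
    rintro q hq (hΓ | h0)
    exacts [hΓS (hwedge ⟨hq, hΓ⟩), (hedge q hq h0).1]
  refine ⟨hF.mono hwedge.image_subset, fun z hz => ?_, fun q hq h0 => (hedge q hq h0).2⟩
  have hΨ := differentiableOn_complexPsi_mk hhol hz
  exact
    { differentiableOn := hF.comp (hΨ.mono inter_subset_left) fun w hw =>
        hwedge ⟨mk_mem_ball hz hw.1, hw.2⟩
      continuousOn := hFc.comp (hΨ.continuousOn.mono inter_subset_left) fun w hw =>
        hmem _ (mk_mem_ball hz hw.1) hw.2
      norm_le := fun w hw =>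
        hbound _ (mk_mem_ball hz hw.1) (hmem _ (mk_mem_ball hz hw.1) hw.2) }

end WedgeFamilies

section LocalExtension

lemma exists_ball_subset_tubeOver {ι : Type*} [Fintype ι] {Γ : Set (ι → ℝ)} (hΓo : IsOpen Γ)
    (hΓne : Γ.Nonempty) (hΓ : ∀ t ∈ Γ, ∀ c : ℝ, 0 < c → c • t ∈ Γ) {δ : ℝ} (hδ : 0 < δ) :
    ∃ κ : ℝ, 0 < κ ∧ κ ≤ δ ∧ ∀ r > (0 : ℝ), ∃ w₀ ∈ ball 0 (δ * r),
      ball w₀ (κ * r) ⊆ tubeOver Γ := by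
  obtain ⟨t, ht⟩ := hΓne
  have hε : ∀ᶠ ε in 𝓝[>] (0 : ℝ), ‖ε • fun k => I * t k‖ < δ := by
    have hlim : Tendsto (fun ε : ℝ => ‖ε • fun k => I * t k‖) (𝓝 0) (𝓝 0) :=
      (continuous_id.smul continuous_const).norm.tendsto' 0 0 (by simp)
    exact (hlim.eventually_lt_const hδ).filter_mono nhdsWithin_le_nhds
  obtain ⟨ε, hεδ, hε0⟩ := (hε.and self_mem_nhdsWithin).exists
  set u : ι → ℂ := ε • fun k => I * t k
  have hu : u ∈ tubeOver Γ := smul_mem_tubeOver hΓ (by simpa [tubeOver] using ht) hε0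
  obtain ⟨κ, hκ, hball⟩ := Metric.isOpen_iff.1 (isOpen_tubeOver hΓo) u hu
  refine ⟨min κ δ, lt_min hκ hδ, min_le_right _ _, fun r hr => ⟨r • u, ?_, fun w hw => ?_⟩⟩
  · rw [mem_ball_zero_iff, norm_smul, Real.norm_of_nonneg hr.le, mul_comm]
    gcongr
  · have hscale : r⁻¹ • w ∈ ball u κ := by
      rw [mem_ball, ← inv_smul_smul₀ hr.ne' u, dist_smul₀, Real.norm_of_nonneg (inv_pos.2 hr).le,
        inv_mul_lt_iff₀ hr, mul_comm]
      exact hw.trans_le (mul_le_mul_of_nonneg_right (min_le_left _ _) hr.le)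
    simpa [smul_inv_smul₀ hr.ne'] using smul_mem_tubeOver hΓ (hball hscale) hr

variable {n d : ℕ} {φ : Dom n d → Fin d → ℝ} {φhat : Amb n d → Fin d → ℂ} {Γ : Set (Fin d → ℝ)}
  {h : Dom n d → ℂ} {F G : Amb n d → ℂ} {R r B : ℝ}

/-- `G` is holomorphic and bounded by `B` in `w` for each fixed `z`, and extends `F` from the
wedge and from `M`. -/
structure IsSlicewiseExtension (φhat : Amb n d → Fin d → ℂ) (Γ : Set (Fin d → ℝ))
    (F : Amb n d → ℂ) (r B : ℝ) (G : Amb n d → ℂ) : Prop where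
  differentiableOn : ∀ z ∈ ball 0 r, DifferentiableOn ℂ (fun w => G (z, w)) (ball 0 (r / 8))
  norm_le : ∀ z ∈ ball 0 r, ∀ w ∈ ball 0 (r / 8), ‖G (z, w)‖ ≤ B
  eq_complexPsi : ∀ z ∈ ball 0 r, ∀ w ∈ ball 0 (r / 2) ∩ (tubeOver Γ ∪ tubeOver {0}),
    G (complexPsi φhat (z, w)) = F (complexPsi φhat (z, w))

theorem exists_isSlicewiseExtension [Nonempty (Fin d)] (hΓo : IsOpen Γ)
    (hΓne : Γ.Nonempty) (hΓ : ∀ t ∈ Γ, ∀ c : ℝ, 0 < c → c • t ∈ Γ) :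
    ∃ c : ℝ, 0 < c ∧ c ≤ 1 ∧ ∀ {φhat : Amb n d → Fin d → ℂ} {h : Dom n d → ℂ}
      {F F' : Amb n d → ℂ} {R B : ℝ}, 0 < R →
      (∀ q ∈ ball (0 : Amb n d) R, DifferentiableAt ℂ (fun w => φhat (q.1, w)) q.2) →
      (∀ q ∈ ball 0 (c * R), ‖φhat q‖ ≤ c * R / 16) → IsWedgeFamily φhat Γ h R B F →
      IsWedgeFamily φhat {t | -t ∈ Γ} h R B F' →
      ∃ G, IsSlicewiseExtension φhat Γ F (c * R) B G := by
  obtain ⟨c, hc0, hc1, hc⟩ := exists_extension_of_curved_cones (F := ℂ) hΓo hΓne hΓ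
  refine ⟨c, hc0, hc1, fun {φhat h F F' R B} hR hhol hsmall hF hF' => ?_⟩
  have hslice : ∀ z : Fin n → ℂ, z ∈ ball 0 (c * R) → ∃ g : (Fin d → ℂ) → ℂ,
      DifferentiableOn ℂ g (ball 0 (c * R / 8)) ∧ (∀ ω ∈ ball 0 (c * R / 8), ‖g ω‖ ≤ B) ∧
      ∀ w ∈ ball 0 (c * R / 2) ∩ (tubeOver Γ ∪ tubeOver {0}),
        g (complexPsi φhat (z, w)).2 = F (complexPsi φhat (z, w)) := by
    intro z hz
    have hzR : z ∈ ball 0 R := ball_subset_ball (mul_le_of_le_one_left hR.le hc1) hz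
    refine hc (p := fun ω => F (z, ω)) (m := fun ω => F' (z, ω)) (f := fun w => I • φhat (z, w))
      hR (fun w hw => ((hhol _ (mk_mem_ball hzR hw)).const_smul I).differentiableWithinAt)
      (fun w hw => ?_) (hF.holomorphicToEdge z hzR) (hF'.holomorphicToEdge z hzR) fun w hw =>
      (hF.eq_of_mem_edge (z, w) (mk_mem_ball hzR hw.1) hw.2).trans
        (hF'.eq_of_mem_edge (z, w) (mk_mem_ball hzR hw.1) hw.2).symm
    rw [norm_smul, norm_I, one_mul]
    exact hsmall _ (mk_mem_ball hz hw)
  choose! g hg hgB hgF using hslice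
  exact ⟨fun q => g q.1 q.2, hg, hgB, hgF⟩

lemma exists_complexPsi_eq (hr : 0 < r)
    (hhol : ∀ q ∈ ball (0 : Amb n d) r, DifferentiableAt ℂ (fun w => φhat (q.1, w)) q.2)
    (hsmall : ∀ q ∈ ball 0 r, ‖φhat q‖ ≤ r / 16) {z : Fin n → ℂ} (hz : z ∈ ball 0 r)
    {ω : Fin d → ℂ} (hω : ω ∈ ball 0 (r / 8)) :
    ∃ w ∈ ball 0 (r / 2), complexPsi φhat (z, w) = (z, ω) ∧ dist w ω = ‖φhat (z, w)‖ := by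
  obtain ⟨w, hw, hwω⟩ := ball_subset_image_id_add hr (f := fun w => I • φhat (z, w))
    (fun w hw => ((hhol _ (mk_mem_ball hz hw)).const_smul I).differentiableWithinAt)
    (fun w hw => by
      rw [norm_smul, norm_I, one_mul]
      exact hsmall _ (mk_mem_ball hz hw)) hω
  refine ⟨w, hw, congr_arg (Prod.mk z) hwω, ?_⟩
  rw [← hwω, dist_self_add_right, norm_smul, norm_I, one_mul]

lemma IsSlicewiseExtension.differentiableOn_prod (hG : IsSlicewiseExtension φhat Γ F r B G)
    (hr : 0 < r)
    (hF : DifferentiableOn ℂ F (complexPsi φhat '' (ball 0 r ∩ Prod.snd ⁻¹' tubeOver Γ)))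
    (hhol : ∀ q ∈ ball (0 : Amb n d) r, DifferentiableAt ℂ (fun w => φhat (q.1, w)) q.2)
    {κ : ℝ} (hκ : κ ≤ 1 / 32) (hsmall : ∀ q ∈ ball 0 r, ‖φhat q‖ ≤ κ / 2 * r)
    {w₀ : Fin d → ℂ} (hw₀ : w₀ ∈ ball 0 (1 / 32 * r)) (hball : ball w₀ (κ * r) ⊆ tubeOver Γ) :
    DifferentiableOn ℂ G (ball 0 (κ / 2 * r) ×ˢ ball w₀ (κ / 2 * r)) := by
  have hκr : κ * r ≤ 1 / 32 * r := by gcongr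
  have hpre : ∀ q ∈ ball (0 : Fin n → ℂ) (κ / 2 * r) ×ˢ ball w₀ (κ / 2 * r),
      ∃ w ∈ ball 0 (r / 2) ∩ tubeOver Γ, q.1 ∈ ball 0 r ∧ complexPsi φhat (q.1, w) = q := by
    rintro ⟨z, ω⟩ ⟨hz, hω⟩
    have hzr : z ∈ ball 0 r := ball_subset_ball (by linarith) hz
    have hωr : ω ∈ ball 0 (r / 8) := by
      rw [mem_ball] at hω hw₀ ⊢
      linarith [dist_triangle ω w₀ 0]
    obtain ⟨w, hw, hwω, hdist⟩ := exists_complexPsi_eq hr hhol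
      (fun q hq => (hsmall q hq).trans (by linarith)) hzr hωr
    refine ⟨w, ⟨hw, hball ?_⟩, hzr, hwω⟩
    have hwr := hsmall _ (mk_mem_ball hzr (ball_subset_ball (half_le_self hr.le) hw))
    rw [mem_ball] at hω ⊢
    linarith [dist_triangle w ω w₀]
  refine (hF.mono fun q hq => ?_).congr fun q hq => ?_ <;> obtain ⟨w, hw, hz, hwq⟩ := hpre q hq
  · exact ⟨(q.1, w), ⟨mk_mem_ball hz (ball_subset_ball (half_le_self hr.le) hw.1), hw.2⟩, hwq⟩
  · rw [← hwq]
    exact hG.eq_complexPsi _ hz w ⟨hw.1, .inl hw.2⟩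

theorem IsSlicewiseExtension.differentiableOn_prod_ball
    (hG : IsSlicewiseExtension φhat Γ F r B G) (hr : 0 < r)
    (hF : DifferentiableOn ℂ F (complexPsi φhat '' (ball 0 r ∩ Prod.snd ⁻¹' tubeOver Γ)))
    (hhol : ∀ q ∈ ball (0 : Amb n d) r, DifferentiableAt ℂ (fun w => φhat (q.1, w)) q.2)
    {κ : ℝ} (hκ0 : 0 < κ) (hκ : κ ≤ 1 / 32) (hsmall : ∀ q ∈ ball 0 r, ‖φhat q‖ ≤ κ / 2 * r)
    {w₀ : Fin d → ℂ} (hw₀ : w₀ ∈ ball 0 (1 / 32 * r)) (hball : ball w₀ (κ * r) ⊆ tubeOver Γ) :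
    DifferentiableOn ℂ G (ball 0 (κ / 2 * r) ×ˢ ball w₀ (1 / 32 * r)) := by
  have hκr : κ * r ≤ 1 / 32 * r := by gcongr
  have hz : ball (0 : Fin n → ℂ) (κ / 2 * r) ⊆ ball 0 r := ball_subset_ball (by linarith)
  have hw : ball w₀ (1 / 32 * r) ⊆ ball 0 (r / 8) :=
    ball_subset_ball' (by linarith [mem_ball.1 hw₀])
  exact differentiableOn_prod_ball_of_slices isOpen_ball (by positivity)
    (fun z hzκ => (hG.differentiableOn z (hz hzκ)).mono hw)
    (fun z hzκ w hwr => hG.norm_le z (hz hzκ) w (hw hwr))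
    (hG.differentiableOn_prod hr hF hhol hκ hsmall hw₀ hball)

lemma IsSlicewiseExtension.eventually_eq (hG : IsSlicewiseExtension φhat Γ F r B G)
    (hr : 0 < r) (hrR : r ≤ R) (hF : IsWedgeFamily φhat Γ h R B F)
    (hreal : ∀ᶠ p in 𝓝 (0 : Dom n d),
      φhat (p.1, fun k => (p.2 k : ℂ)) = fun k => ((φ p k : ℝ) : ℂ)) :
    ∀ᶠ p in 𝓝 0, G (iotaM φ p) = h p := by
  filter_upwards [hreal, ball_mem_nhds 0 (half_pos hr)] with p hp hpr
  have hpr := mem_ball_zero_iff.1 hpr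
  have hz : p.1 ∈ ball 0 r := mem_ball_zero_iff.2 (by linarith [norm_fst_le p])
  have hw : (fun k => (p.2 k : ℂ)) ∈ ball 0 (r / 2) := by
    rw [mem_ball_zero_iff, pi_norm_lt_iff (half_pos hr)]
    intro k
    rw [norm_real]
    exact (norm_le_pi_norm p.2 k).trans_lt ((norm_snd_le p).trans_lt hpr)
  have h0 : (fun k => (p.2 k : ℂ)) ∈ tubeOver {0} := mem_tubeOver_zero.2 fun k => ofReal_im _
  rw [← complexPsi_ofReal hp, hG.eq_complexPsi _ hz _ ⟨hw, .inr h0⟩]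
  exact hF.eq_of_mem_edge _ (ball_subset_ball hrR
    (mk_mem_ball hz (ball_subset_ball (half_le_self hr.le) hw))) h0

end LocalExtension

section MainTheorem

variable {n d : ℕ} {φ : Dom n d → Fin d → ℝ} {φhat : Amb n d → Fin d → ℂ}

lemma isLittleO_id_of_eq_ofReal (hφ : AnalyticAt ℝ φ 0) (hφ0 : φ 0 = 0) (hdφ0 : fderiv ℝ φ 0 = 0)
    (hreal : ∀ᶠ p in 𝓝 (0 : Dom n d),
      φhat (p.1, fun k => (p.2 k : ℂ)) = fun k => ((φ p k : ℝ) : ℂ))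
    (hhol : ∀ᶠ q in 𝓝 (0 : Amb n d), DifferentiableAt ℂ (fun w => φhat (q.1, w)) q.2) :
    φhat =o[𝓝 0] (id : Amb n d → Amb n d) := by
  refine Asymptotics.isLittleO_pi.2 fun k => ?_
  have hdφk : fderiv ℝ (fun p => φ p k) 0 = 0 := by
    have hderiv := (hasFDerivAt_pi'.1 hφ.differentiableAt.hasFDerivAt k).fderiv
    rwa [hdφ0, ContinuousLinearMap.comp_zero] at hderiv
  exact (isBigO_norm_sq_of_eq_ofReal (analyticAt_pi_iff.1 hφ k) (congr_fun hφ0 k) hdφk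
    (hreal.mono fun p hp => congr_fun hp k)
    (hhol.mono fun q hq => differentiableAt_pi.1 hq k)).trans_isLittleO
      (Asymptotics.isLittleO_norm_pow_id one_lt_two)

lemma tendsto_complexPsi (hφ0 : φ 0 = 0) (hφhat : φhat =o[𝓝 0] (id : Amb n d → Amb n d)) :
    Tendsto (complexPsi φhat) (𝓝 0) (𝓝 (iotaM φ 0)) := by
  have hlim : Tendsto φhat (𝓝 0) (𝓝 0) := hφhat.trans_tendsto tendsto_id
  have hι : iotaM φ 0 = ((0 : Amb n d).1, (0 : Amb n d).2 + I • (0 : Fin d → ℂ)) := by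
    ext <;> simp [iotaM, hφ0]
  rw [hι]
  exact (continuous_fst.tendsto 0).prodMk_nhds ((continuous_snd.tendsto 0).add (hlim.const_smul I))

theorem extends_up_down_implies_extends_general (hd : 1 ≤ d) (hφ : AnalyticAt ℝ φ 0)
    (hφ0 : φ 0 = 0) (hdφ0 : fderiv ℝ φ 0 = 0)
    (hreal : ∀ᶠ p in 𝓝 (0 : Dom n d),
      φhat (p.1, fun k => (p.2 k : ℂ)) = fun k => ((φ p k : ℝ) : ℂ))
    (hhol : ∀ᶠ q in 𝓝 (0 : Amb n d), DifferentiableAt ℂ (fun w => φhat (q.1, w)) q.2)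
    {h : Dom n d → ℂ} {Γ : Set (Fin d → ℝ)} (hΓo : IsOpen Γ) (hΓne : Γ.Nonempty)
    (hΓ : ∀ t ∈ Γ, ∀ c : ℝ, 0 < c → c • t ∈ Γ) (hup : ExtendsToWedge φ φhat Γ h)
    (hdown : ExtendsToWedge φ φhat {t | -t ∈ Γ} h) :
    ∃ V : Set (Amb n d), IsOpen V ∧ 0 ∈ V ∧ ∃ G : Amb n d → ℂ, DifferentiableOn ℂ G V ∧
      ∀ᶠ p in 𝓝 (0 : Dom n d), G (iotaM φ p) = h p := by
  have : Nonempty (Fin d) := ⟨⟨0, hd⟩⟩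
  have hlittle := isLittleO_id_of_eq_ofReal hφ hφ0 hdφ0 hreal hhol
  have hlim := tendsto_complexPsi hφ0 hlittle
  obtain ⟨F, hF⟩ := hup.exists_isWedgeFamily hlim hreal hhol
  obtain ⟨F', hF'⟩ := hdown.exists_isWedgeFamily hlim hreal hhol
  obtain ⟨c, hc0, hc1, hc⟩ := exists_isSlicewiseExtension (n := n) hΓo hΓne hΓ
  obtain ⟨κ, hκ0, hκ, hcone⟩ := exists_ball_subset_tubeOver hΓo hΓne hΓ
    (show (0 : ℝ) < 1 / 32 by norm_num)
  obtain ⟨R, hFR, hFR', hhol, hsmall, hR⟩ := (hF.and (hF'.and ((eventually_forall_mem_ball hhol).and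
    ((eventually_forall_mem_ball (hlittle.def (half_pos hκ0))).and self_mem_nhdsWithin)))).exists
  have hcR : 0 < c * R := mul_pos hc0 hR
  have hcRR : c * R ≤ R := mul_le_of_le_one_left hR.le hc1
  replace hsmall : ∀ q ∈ ball 0 (c * R), ‖φhat q‖ ≤ κ / 2 * (c * R) := fun q hq =>
    (hsmall q (ball_subset_ball hcRR hq)).trans (by gcongr; exact (mem_ball_zero_iff.1 hq).le)
  obtain ⟨G, hG⟩ := hc hR hhol (fun q hq => (hsmall q hq).trans (by nlinarith)) hFR hFR'
  obtain ⟨w₀, hw₀, hball⟩ := hcone (c * R) hcR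
  exact ⟨ball 0 (κ / 2 * (c * R)) ×ˢ ball w₀ (1 / 32 * (c * R)), isOpen_ball.prod isOpen_ball,
    ⟨mem_ball_self (by positivity), mem_ball_comm.1 hw₀⟩, G,
    hG.differentiableOn_prod_ball hcR
      (hFR.differentiableOn.mono (image_mono (inter_subset_inter_left _ (ball_subset_ball hcRR))))
      (fun q hq => hhol q (ball_subset_ball hcRR hq)) hκ0 hκ hsmall hw₀ hball,
    hG.eventually_eq hcR hcRR hFR hreal⟩

end MainTheorem

/-- edge-of-the-wedge for CR functions: a CR function of class `C¹` on `M`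
which extends continuously to holomorphic functions in the wedges `W_Γ` and `W_{−Γ}`
extends holomorphically to a full neighborhood of the origin. -/
theorem extends_up_down_implies_extends {n d : ℕ} (hn : 1 ≤ n) (hd : 1 ≤ d)
    -- the manifold M, in normal form
    (φ : Dom n d → Fin d → ℝ)
    (hφan : ∀ᶠ p in 𝓝 (0 : Dom n d), AnalyticAt ℝ φ p)
    (hφ0 : φ 0 = 0) (hdφ0 : fderiv ℝ φ 0 = 0)
    -- the extension of φ holomorphic in the last variable
    (φhat : Amb n d → Fin d → ℂ)
    (hφhat_real : ∀ᶠ p in 𝓝 (0 : Dom n d),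
      φhat (p.1, fun k => (p.2 k : ℂ)) = fun k => ((φ p k : ℝ) : ℂ))
    (hφhat_hol : ∀ᶠ zw in 𝓝 (0 : Amb n d),
      DifferentiableAt ℂ (fun w => φhat (zw.1, w)) zw.2)
    -- the CR function h of class C¹
    (h : Dom n d → ℂ) (U : Set (Dom n d)) (hU : IsOpen U) (h0U : (0 : Dom n d) ∈ U)
    (hhsm : ContDiffOn ℝ 1 h U)
    (hhCR : ∀ p ∈ U, ∀ j, Lambda φ j h p = 0)
    -- the open convex cone Γ
    (Γ : Set (Fin d → ℝ)) (hΓo : IsOpen Γ) (hΓconv : Convex ℝ Γ) (hΓne : Γ.Nonempty)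
    (hΓcone : ∀ t ∈ Γ, ∀ c : ℝ, 0 < c → c • t ∈ Γ)
    -- h extends to the wedges W_Γ and W_{−Γ}
    (hup : ExtendsToWedge φ φhat Γ h)
    (hdown : ExtendsToWedge φ φhat {t | -t ∈ Γ} h) :
    -- conclusion: h extends holomorphically to a full neighborhood of 0 ∈ ℂᴺ
    ∃ V : Set (Amb n d), IsOpen V ∧ (0 : Amb n d) ∈ V ∧
      ∃ G : Amb n d → ℂ, DifferentiableOn ℂ G V ∧
        ∀ᶠ p in 𝓝 (0 : Dom n d), G (iotaM φ p) = h p := by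
  exact extends_up_down_implies_extends_general hd hφan.self_of_nhds hφ0 hdφ0 hφhat_real
    hφhat_hol hΓo hΓne hΓcone hup hdown
end
end

section
/- Let H : M → M' be a CR map of class C^{k₀} that is k₀-nondegenerate at 0, and let K be the cardinality of {β ∈ ℕⁿ : 1 ≤ |β| ≤ k₀}. Then there exist holomorphic functions Υ₁,…,Υ_{N'}, defined on a neighborhood of the point (0, (Λ^β H̄(0))_{1 ≤ |β| ≤ k₀}) in ℂ^{N'} × (ℂ^{N'})^K, such that near 0 on M: Hⱼ(z,s) = Υⱼ( H̄(z,s), (Λ^β H̄(z,s))_{1 ≤ |β| ≤ k₀} ) for j = 1,…,N', where H̄ = (conj H₁,…,conj H_{N'}). -/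
open Complex Topology Filter

noncomputable section

/-!
The real-analytic equations `ρ'(Z, Z̄) = 0` of `M'` are polarized to holomorphic functions
`R(ζ, Z)` of two independent variables with `R(Z̄, Z) = ρ'(Z, Z̄)`, so that `R(H̄, H) = 0` on `M`.
The CR vector fields annihilate `H`. Applying `Λ^α` to `R(H̄, H) = 0` therefore gives an equation
which is holomorphic in `H` and in the derivatives `Λ^β H̄`, `β ≤ α`. The derivative of its left
side with respect to `H` at `0` is `Λ^α(ρ'_Z ∘ H)(0)`, since differentiation in `H` commutes with
the prolongation along `Λ^α`. By `k₀`-nondegeneracy these covectors, for `|α| ≤ k₀`, have no common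
kernel, so the holomorphic implicit function theorem solves the system for `H`.
-/

section Complexification

variable {ι F : Type*} [Fintype ι] [DecidableEq ι] [NormedAddCommGroup F] [NormedSpace ℂ F]

/-- The power series in complex variables indexed by `ι` which has the same coefficients as the
power series `p` in real variables. -/
def complexifySeries (p : FormalMultilinearSeries ℝ (ι → ℝ) F) :
    FormalMultilinearSeries ℂ (ι → ℂ) F := fun n =>
  ∑ c : Fin n → ι,
    ((ContinuousMultilinearMap.mkPiAlgebra ℂ (Fin n) ℂ).compContinuousLinearMap fun i =>
      ContinuousLinearMap.proj (R := ℂ) (φ := fun _ : ι => ℂ) (c i)).smulRight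
      (p n fun i => Pi.single (c i) 1)

lemma complexifySeries_ofReal (p : FormalMultilinearSeries ℝ (ι → ℝ) F) (m : ℕ) (x : ι → ℝ) :
    complexifySeries p m (fun _ i => (x i : ℂ)) = p m fun _ => x := by
  have hx : x = ∑ i, x i • (Pi.single i 1 : ι → ℝ) := by
    ext j
    simp [Pi.single_apply]
  have hexpand : p m (fun _ => x) =
      ∑ c : Fin m → ι, (∏ i, x (c i)) • p m fun i => Pi.single (c i) 1 := by
    conv_lhs => rw [hx]
    rw [ContinuousMultilinearMap.map_sum (p m) fun _ i => x i • (Pi.single i 1 : ι → ℝ)]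
    exact Finset.sum_congr rfl fun c _ => ContinuousMultilinearMap.map_smul_univ (p m) _ _
  simp [complexifySeries, hexpand, ← ofReal_prod]

lemma norm_complexifySeries_le (p : FormalMultilinearSeries ℝ (ι → ℝ) F) (m : ℕ) :
    ‖complexifySeries p m‖ ≤ (Fintype.card ι : ℝ) ^ m * ‖p m‖ := by
  have hmonomial (c : Fin m → ι) :
      ‖(ContinuousMultilinearMap.mkPiAlgebra ℂ (Fin m) ℂ).compContinuousLinearMap fun i =>
        ContinuousLinearMap.proj (R := ℂ) (φ := fun _ : ι => ℂ) (c i)‖ ≤ 1 := by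
    refine ContinuousMultilinearMap.opNorm_le_bound zero_le_one fun v => ?_
    simp only [ContinuousMultilinearMap.compContinuousLinearMap_apply,
      ContinuousMultilinearMap.mkPiAlgebra_apply, norm_prod, one_mul]
    exact Finset.prod_le_prod (fun _ _ => norm_nonneg _) fun i _ => norm_le_pi_norm (v i) (c i)
  have hcoeff (c : Fin m → ι) : ‖p m fun i => Pi.single (c i) 1‖ ≤ ‖p m‖ := by
    simpa [Pi.norm_single] using (p m).le_opNorm fun i => Pi.single (c i) 1
  calc ‖complexifySeries p m‖ ≤ ∑ _c : Fin m → ι, 1 * ‖p m‖ :=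
        norm_sum_le_of_le _ fun c _ => by
          rw [ContinuousMultilinearMap.norm_smulRight]
          exact mul_le_mul (hmonomial c) (hcoeff c) (norm_nonneg _) zero_le_one
    _ = (Fintype.card ι : ℝ) ^ m * ‖p m‖ := by simp

lemma complexifySeries_radius_pos {p : FormalMultilinearSeries ℝ (ι → ℝ) F} (hp : 0 < p.radius) :
    0 < (complexifySeries p).radius := by
  obtain ⟨C, r, _, hr, hpC⟩ := p.le_mul_pow_of_radius_pos hp
  lift r to NNReal using hr.le
  rw [NNReal.coe_pos] at hr
  have hcr : (Fintype.card ι + 1) * r ≠ 0 := by positivity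
  refine (ENNReal.coe_pos.2 (inv_pos.2 hcr.bot_lt)).trans_le
    (FormalMultilinearSeries.le_radius_of_bound _ C fun m => ?_)
  have hbound : ‖complexifySeries p m‖ ≤ C * ((Fintype.card ι + 1) * r : NNReal) ^ m :=
    calc ‖complexifySeries p m‖ ≤ (Fintype.card ι : ℝ) ^ m * ‖p m‖ := norm_complexifySeries_le p m
      _ ≤ (Fintype.card ι + 1 : ℝ) ^ m * (C * r ^ m) := by
        gcongr
        · linarith
        · exact hpC m
      _ = C * ((Fintype.card ι + 1) * r : NNReal) ^ m := by
        rw [NNReal.coe_mul, mul_pow]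
        push_cast
        ring
  rwa [NNReal.coe_inv, inv_pow, ← div_eq_mul_inv, div_le_iff₀ (by positivity)]

end Complexification

section Polarization

variable {ι F : Type*} [NormedAddCommGroup F] [NormedSpace ℂ F]

lemma exists_complexification [Fintype ι] [CompleteSpace F] {f : (ι → ℝ) → F} {a : ι → ℝ}
    (hf : AnalyticAt ℝ f a) :
    ∃ R : (ι → ℂ) → F, AnalyticAt ℂ R (fun i => (a i : ℂ)) ∧
      ∀ᶠ x : ι → ℝ in 𝓝 a, R (fun i => (x i : ℂ)) = f x := by
  classical
  obtain ⟨p, hp⟩ := hf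
  have hq := (complexifySeries p).hasFPowerSeriesOnBall
    (complexifySeries_radius_pos hp.radius_pos)
  have hR := hq.comp_sub (fun i => (a i : ℂ))
  rw [zero_add] at hR
  refine ⟨_, hR.analyticAt, ?_⟩
  filter_upwards [hp.eventually_hasSum_sub] with x hx
  rw [← hx.tsum_eq, FormalMultilinearSeries.sum]
  congr 1 with m
  rw [← complexifySeries_ofReal]
  congr 2 with _ i
  simp

lemma exists_polarization [Fintype ι] [CompleteSpace F] {r : (ι → ℂ) → F} {a : ι → ℂ}
    (hr : AnalyticAt ℝ r a) :
    ∃ R : (ι → ℂ) × (ι → ℂ) → F, AnalyticAt ℂ R (star a, a) ∧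
      ∀ᶠ Z in 𝓝 a, R (star Z, Z) = r Z := by
  classical
  let ofReIm : (ι ⊕ ι → ℝ) →L[ℝ] (ι → ℂ) := ContinuousLinearMap.pi fun m =>
    ofRealCLM.comp (.proj (Sum.inl m)) + I • ofRealCLM.comp (.proj (Sum.inr m))
  let reIm : (ι → ℂ) → ι ⊕ ι → ℝ := fun Z => Sum.elim (fun m => (Z m).re) fun m => (Z m).im
  let polar : (ι → ℂ) × (ι → ℂ) →L[ℂ] (ι ⊕ ι → ℂ) := ContinuousLinearMap.pi <| Sum.elim
    (fun m => (2⁻¹ : ℂ) • ((ContinuousLinearMap.proj m).comp (.snd ℂ _ _) +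
      (ContinuousLinearMap.proj m).comp (.fst ℂ _ _)))
    (fun m => (-I / 2 : ℂ) • ((ContinuousLinearMap.proj m).comp (.snd ℂ _ _) -
      (ContinuousLinearMap.proj m).comp (.fst ℂ _ _)))
  have hofReIm (Z : ι → ℂ) : ofReIm (reIm Z) = Z := by
    ext m
    simp [ofReIm, reIm, mul_comm I, re_add_im]
  have hpolar (Z : ι → ℂ) : polar (star Z, Z) = fun i => (reIm Z i : ℂ) := by
    ext (m | m) <;> simp [polar, reIm, Complex.ext_iff] <;> ring
  have hreIm : Continuous reIm := by
    refine continuous_pi fun i => ?_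
    rcases i with m | m
    exacts [continuous_re.comp (continuous_apply m), continuous_im.comp (continuous_apply m)]
  obtain ⟨R, hR, hRr⟩ := exists_complexification (f := r ∘ ofReIm) (a := reIm a)
    (AnalyticAt.comp_of_eq hr (ofReIm.analyticAt _) (hofReIm a))
  refine ⟨R ∘ polar, hR.comp_of_eq (polar.analyticAt _) (hpolar a), ?_⟩
  filter_upwards [hreIm.continuousAt.eventually hRr] with Z hZ
  rw [Function.comp_apply, hpolar, hZ, Function.comp_apply, hofReIm]

lemma wirtinger_eq_fderiv_polarization [Finite ι] {r : (ι → ℂ) → F}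
    {R : (ι → ℂ) × (ι → ℂ) → F} {Z : ι → ℂ}
    (hR : DifferentiableAt ℂ R (star Z, Z)) (hRr : ∀ᶠ Y in 𝓝 Z, R (star Y, Y) = r Y)
    (v : ι → ℂ) :
    (1 / 2 : ℂ) • (fderiv ℝ r Z v - I • fderiv ℝ r Z (I • v)) =
      fderiv ℂ R (star Z, Z) (0, v) := by
  have := Fintype.ofFinite ι
  let diag : (ι → ℂ) →L[ℝ] (ι → ℂ) × (ι → ℂ) :=
    (starL' ℝ : (ι → ℂ) ≃L[ℝ] (ι → ℂ)).toContinuousLinearMap.prod (.id ℝ _)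
  have hr : fderiv ℝ r Z = ((fderiv ℂ R (star Z, Z)).restrictScalars ℝ).comp diag := by
    have hcomp : HasFDerivAt (R ∘ diag) _ Z :=
      HasFDerivAt.comp (f := diag) Z (hR.hasFDerivAt.restrictScalars ℝ) diag.hasFDerivAt
    exact (hcomp.congr_of_eventuallyEq (hRr.mono fun _ h => h.symm)).fderiv
  have hdiag : diag v - I • diag (I • v) = (2 : ℂ) • (0, v) := by
    ext m <;> simp [diag, ← mul_assoc]
    ring
  simp only [hr, ContinuousLinearMap.comp_apply, ContinuousLinearMap.coe_restrictScalars']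
  rw [← map_smul, ← map_sub, hdiag, map_smul, smul_smul]
  norm_num

end Polarization

section VectorFields

variable {E W F G ι : Type*} [NormedAddCommGroup E] [NormedSpace ℝ E]
  [NormedAddCommGroup W] [NormedSpace ℂ W] [NormedAddCommGroup F] [NormedSpace ℂ F]
  [NormedAddCommGroup G] [NormedSpace ℂ G]

/-- The derivative of `f` along a complex vector field `X₁ + iX₂` on the real space `E`, which is
encoded as the pair `X = (X₁, X₂)` of its real and imaginary parts. -/
def derivAlong (X : E → E × E) (f : E → F) (p : E) : F :=
  fderiv ℝ f p (X p).1 + I • fderiv ℝ f p (X p).2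

/-- The iterated derivative `X_{j₁} ⋯ X_{jₘ} f` along the word `w = [j₁, …, jₘ]`. -/
def wordDeriv (X : ι → E → E × E) (w : List ι) (f : E → F) : E → F :=
  w.foldr (fun j => derivAlong (X j)) f

variable {X : E → E × E} {f g : E → F} {p : E}

lemma derivAlong_congr (h : f =ᶠ[𝓝 p] g) : derivAlong X f p = derivAlong X g p := by
  rw [derivAlong, derivAlong, h.fderiv_eq]

lemma eventuallyEq_derivAlong (h : f =ᶠ[𝓝 p] g) : derivAlong X f =ᶠ[𝓝 p] derivAlong X g :=
  h.eventuallyEq_nhds.mono fun _ => derivAlong_congr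

lemma derivAlong_const (c : F) : derivAlong X (fun _ => c) p = 0 := by
  simp [derivAlong]

lemma derivAlong_comp {P : F → G} (hP : DifferentiableAt ℂ P (f p))
    (hf : DifferentiableAt ℝ f p) :
    derivAlong X (fun q => P (f q)) p = fderiv ℂ P (f p) (derivAlong X f p) := by
  have hcomp : HasFDerivAt (fun q => P (f q)) _ p :=
    (hP.hasFDerivAt.restrictScalars ℝ).comp p hf.hasFDerivAt
  simp [derivAlong, hcomp.fderiv]

lemma derivAlong_prodMk {g : E → G} (hf : DifferentiableAt ℝ f p) (hg : DifferentiableAt ℝ g p) :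
    derivAlong X (fun q => (f q, g q)) p = (derivAlong X f p, derivAlong X g p) := by
  simp [derivAlong, hf.fderiv_prodMk hg]

lemma derivAlong_pi [Fintype ι] {f : E → ι → F} (hf : ∀ i, DifferentiableAt ℝ (fun q => f q i) p)
    (i : ι) : derivAlong X f p i = derivAlong X (fun q => f q i) p := by
  simp [derivAlong, fderiv_pi hf]

lemma derivAlong_eq_zero_of_pi [Fintype ι] {f : E → ι → F}
    (hf : ∀ i, derivAlong X (fun q => f q i) p = 0) : derivAlong X f p = 0 := by
  by_cases hdiff : DifferentiableAt ℝ f p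
  · ext1 i
    rw [derivAlong_pi (differentiableAt_pi.1 hdiff), hf i, Pi.zero_apply]
  · simp [derivAlong, fderiv_zero_of_not_differentiableAt hdiff]

lemma contDiffAt_derivAlong {m : ℕ} (hX : ContDiffAt ℝ m X p) (hf : ContDiffAt ℝ (m + 1) f p) :
    ContDiffAt ℝ m (derivAlong X f) p := by
  have hfderiv : ContDiffAt ℝ m (fderiv ℝ f) p := hf.fderiv_right le_rfl
  exact (hfderiv.clm_apply hX.fst).add (contDiffAt_const.smul (hfderiv.clm_apply hX.snd))

variable {X : ι → E → E × E} {w : List ι} {k : ℕ}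

lemma wordDeriv_cons (j : ι) (f : E → F) :
    wordDeriv X (j :: w) f = derivAlong (X j) (wordDeriv X w f) := rfl

lemma eventuallyEq_wordDeriv (h : f =ᶠ[𝓝 p] g) : wordDeriv X w f =ᶠ[𝓝 p] wordDeriv X w g := by
  induction w with
  | nil => exact h
  | cons j w ih => exact eventuallyEq_derivAlong ih

lemma wordDeriv_zero : wordDeriv X w (fun _ : E => (0 : F)) = fun _ => 0 := by
  induction w with
  | nil => rfl
  | cons j w ih => funext p; rw [wordDeriv_cons, ih, derivAlong_const]

lemma contDiffAt_wordDeriv (hX : ∀ m < k, ∀ j, ContDiffAt ℝ m (X j) p)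
    (hf : ContDiffAt ℝ k f p) {l : ℕ} (hl : l + w.length ≤ k) :
    ContDiffAt ℝ l (wordDeriv X w f) p := by
  induction w generalizing l with
  | nil => exact hf.of_le (mod_cast hl)
  | cons j w ih =>
    rw [List.length_cons] at hl
    exact contDiffAt_derivAlong (hX l (by lia) j) (mod_cast ih (l := l + 1) (by lia))

lemma eventually_differentiableAt_wordDeriv (hX : ∀ m < k, ∀ j, ContDiffAt ℝ m (X j) p)
    (hf : ContDiffAt ℝ k f p) (hw : w.length < k) :
    ∀ᶠ q in 𝓝 p, DifferentiableAt ℝ (wordDeriv X w f) q :=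
  ((contDiffAt_wordDeriv hX hf (l := 1) (by lia)).eventually (by simp)).mono
    fun _ h => h.differentiableAt one_ne_zero

lemma wordDeriv_clm_comp (hX : ∀ m < k, ∀ j, ContDiffAt ℝ m (X j) p) (hf : ContDiffAt ℝ k f p)
    (hw : w.length ≤ k) (T : F →L[ℂ] G) :
    wordDeriv X w (fun q => T (f q)) =ᶠ[𝓝 p] fun q => T (wordDeriv X w f q) := by
  induction w with
  | nil => rfl
  | cons j w ih =>
    filter_upwards [(ih (by grind)).eventuallyEq_nhds,
      eventually_differentiableAt_wordDeriv hX hf hw] with q hq hdiff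
    rw [wordDeriv_cons, derivAlong_congr hq, derivAlong_comp T.differentiableAt hdiff, T.fderiv,
      wordDeriv_cons]

end VectorFields

section Prolongation

variable {E V W F ι : Type*} [NormedAddCommGroup E] [NormedSpace ℝ E]
  [NormedAddCommGroup V] [NormedSpace ℂ V] [NormedAddCommGroup W] [NormedSpace ℂ W]
  [NormedAddCommGroup F] [NormedSpace ℂ F]

/-- The subwords of `w`. By the Leibniz rule, these are the words whose derivatives enter an
iterated derivative along `w` of a function of several other functions. -/
abbrev Subword (w : List ι) : Type _ := {u : List ι // u.Sublist w}

instance (w : List ι) : Fintype (Subword w) := by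
  classical exact Fintype.subtype w.sublists.toFinset (by simp)

/-- The empty subword; evaluating a jet at it gives back the underlying function. -/
def jetBase (w : List ι) : Subword w := ⟨[], w.nil_sublist⟩

/-- The jet of `g` along the word `w`: the derivatives of `g` along all subwords of `w`. -/
def jet (X : ι → E → E × E) (w : List ι) (g : E → W) (p : E) : Subword w → W :=
  fun u => wordDeriv X u g p

variable (V W)

/-- Reads off the jet along `w` from the jet along `j :: w`, the second argument being kept. -/
def jetRestrict (j : ι) (w : List ι) :
    (Subword (j :: w) → W) × V →L[ℂ] (Subword w → W) × V :=
  (ContinuousLinearMap.pi fun u => .proj ⟨u, u.2.cons j⟩).prodMap (.id ℂ V)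

/-- Reads off the derivative along `X j` of the jet along `w` from the jet along `j :: w`, the
second argument being treated as annihilated by `X j`. -/
def jetShift (j : ι) (w : List ι) :
    (Subword (j :: w) → W) × V →L[ℂ] (Subword w → W) × V :=
  (ContinuousLinearMap.pi fun u => .proj ⟨j :: u, u.2.cons_cons j⟩).prodMap 0

variable {V W}

/-- The prolongation of `R` along `w`: the function expressing `wordDeriv X w (R (g, f))` through
the jet of `g` along `w` and `f`, for any `f` annihilated by the vector fields `X j`. -/
def prolong (R : W × V → F) : (w : List ι) → (Subword w → W) × V → F
  | [] => fun z => R (z.1 (jetBase []), z.2)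
  | j :: w => fun z => fderiv ℂ (prolong R w) (jetRestrict V W j w z) (jetShift V W j w z)

variable {R : W × V → F} {w : List ι}

lemma analyticAt_clm_apply {T : V → W →L[ℂ] F} {y : V → W} {z : V} (hT : AnalyticAt ℂ T z)
    (hy : AnalyticAt ℂ y z) : AnalyticAt ℂ (fun v => T v (y v)) z :=
  ((ContinuousLinearMap.id ℂ (W →L[ℂ] F)).analyticAt_bilinear _).comp₂ hT hy

lemma analyticAt_prolong [CompleteSpace F] {z : (Subword w → W) × V}
    (hR : AnalyticAt ℂ R (z.1 (jetBase w), z.2)) : AnalyticAt ℂ (prolong R w) z := by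
  induction w with
  | nil =>
    exact AnalyticAt.comp_of_eq hR
      (((ContinuousLinearMap.proj (R := ℂ) (φ := fun _ : Subword ([] : List ι) => W)
        (jetBase [])).prodMap (.id ℂ V)).analyticAt z) rfl
  | cons j w ih =>
    have hderiv : AnalyticAt ℂ (fun y => fderiv ℂ (prolong R w) (jetRestrict V W j w y)) z :=
      (ih (z := jetRestrict V W j w z) hR).fderiv.comp_of_eq
        ((jetRestrict V W j w).analyticAt z) rfl
    exact analyticAt_clm_apply hderiv ((jetShift V W j w).analyticAt z)

/-- The inductive step is the symmetry of the second derivative of `prolong R w`. -/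
lemma fderiv_prolong_inr [CompleteSpace F] {z : (Subword w → W) × V}
    (hR : AnalyticAt ℂ R (z.1 (jetBase w), z.2)) (ξ : V) :
    fderiv ℂ (prolong R w) z (0, ξ) = prolong (fun y => fderiv ℂ R y (0, ξ)) w z := by
  induction w with
  | nil =>
    have hproj := ((ContinuousLinearMap.proj (R := ℂ) (φ := fun _ : Subword ([] : List ι) => W)
      (jetBase [])).prodMap (.id ℂ V)).hasFDerivAt (x := z)
    have hcomp := HasFDerivAt.comp z
      (g := R) (f := fun y : (Subword ([] : List ι) → W) × V => (y.1 (jetBase []), y.2))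
      hR.differentiableAt.hasFDerivAt hproj
    exact congr($hcomp.fderiv (0, ξ))
  | cons j w ih =>
    set y := jetRestrict V W j w z
    set v := jetShift V W j w z
    have hP : AnalyticAt ℂ (prolong R w) y := analyticAt_prolong hR
    have hDP : HasFDerivAt (fderiv ℂ (prolong R w)) (fderiv ℂ (fderiv ℂ (prolong R w)) y) y :=
      hP.fderiv.differentiableAt.hasFDerivAt
    have hih : (fun y => fderiv ℂ (prolong R w) y (0, ξ)) =ᶠ[𝓝 y]
        prolong (fun y => fderiv ℂ R y (0, ξ)) w := by
      have hbase : Continuous fun y : (Subword w → W) × V => (y.1 (jetBase w), y.2) := by fun_prop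
      filter_upwards [hbase.continuousAt.eventually hR.eventually_analyticAt] with y hy
        using ih hy
    calc fderiv ℂ (prolong R (j :: w)) z (0, ξ)
        = fderiv ℂ (prolong R w) y (jetShift V W j w (0, ξ)) +
            fderiv ℂ (fderiv ℂ (prolong R w)) y (jetRestrict V W j w (0, ξ)) v :=
          congr($(((HasFDerivAt.comp z hDP (jetRestrict V W j w).hasFDerivAt).clm_apply
            (jetShift V W j w).hasFDerivAt).fderiv) (0, ξ))
      _ = fderiv ℂ (fderiv ℂ (prolong R w)) y (0, ξ) v := by
          rw [show jetShift V W j w (0, ξ) = 0 from rfl, map_zero, zero_add]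
          rfl
      _ = fderiv ℂ (fderiv ℂ (prolong R w)) y v (0, ξ) :=
          ((hP.contDiffAt (n := 2)).isSymmSndFDerivAt (by simp)).eq _ _
      _ = fderiv ℂ (fun y => fderiv ℂ (prolong R w) y (0, ξ)) y v := by
          rw [(hDP.clm_apply (hasFDerivAt_const _ _)).fderiv]
          simp
      _ = prolong (fun y => fderiv ℂ R y (0, ξ)) (j :: w) z := by
          rw [hih.fderiv_eq]
          rfl

variable {X : ι → E → E × E} {f : E → V} {g : E → W} {x : E} {k : ℕ}

lemma contDiffAt_jet (hX : ∀ m < k, ∀ j, ContDiffAt ℝ m (X j) x) (hg : ContDiffAt ℝ k g x)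
    {l : ℕ} (hl : l + w.length ≤ k) : ContDiffAt ℝ l (jet X w g) x :=
  contDiffAt_pi.2 fun u => contDiffAt_wordDeriv hX hg (by grind [u.2.length_le])

lemma derivAlong_jet_prodMk {j : ι} {p : E} (hg : DifferentiableAt ℝ (jet X w g) p)
    (hf : DifferentiableAt ℝ f p) (hfX : derivAlong (X j) f p = 0) :
    derivAlong (X j) (fun q => (jet X w g q, f q)) p =
      jetShift V W j w (jet X (j :: w) g p, f p) := by
  rw [derivAlong_prodMk hg hf, hfX]
  refine Prod.ext ?_ rfl
  ext1 u
  exact derivAlong_pi (differentiableAt_pi.1 hg) u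

lemma wordDeriv_comp_eq_prolong [CompleteSpace F] (hX : ∀ m < k, ∀ j, ContDiffAt ℝ m (X j) x)
    (hR : AnalyticAt ℂ R (g x, f x)) (hg : ContDiffAt ℝ k g x) (hf : ContDiffAt ℝ k f x)
    (hfX : ∀ᶠ p in 𝓝 x, ∀ j, derivAlong (X j) f p = 0) (hw : w.length ≤ k) :
    wordDeriv X w (fun p => R (g p, f p)) =ᶠ[𝓝 x] fun p => prolong R w (jet X w g p, f p) := by
  induction w with
  | nil => rfl
  | cons j w ih =>
    have hjet : ContDiffAt ℝ 1 (jet X w g) x := contDiffAt_jet hX hg (l := 1) (by grind)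
    have hf1 : ContDiffAt ℝ 1 f x := hf.of_le (mod_cast (by grind : 1 ≤ k))
    have hR' : ∀ᶠ z in 𝓝 (jet X w g x, f x), DifferentiableAt ℂ (prolong R w) z :=
      (analyticAt_prolong hR).eventually_analyticAt.mono fun _ h => h.differentiableAt
    filter_upwards [(ih (by grind)).eventuallyEq_nhds, hjet.eventually (by simp),
      hf1.eventually (by simp), (hjet.prodMk hf1).continuousAt.eventually hR', hfX]
      with p hp hjetp hfp hRp hfXp
    have hjetp' := hjetp.differentiableAt one_ne_zero
    have hfp' := hfp.differentiableAt one_ne_zero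
    rw [wordDeriv_cons, derivAlong_congr hp,
      derivAlong_comp (f := fun q => (jet X w g q, f q)) hRp (hjetp'.prodMk hfp'),
      derivAlong_jet_prodMk hjetp' hfp' (hfXp j)]
    rfl

lemma eventually_prolong_jet_eq_zero [CompleteSpace F]
    (hX : ∀ m < k, ∀ j, ContDiffAt ℝ m (X j) x) (hR : AnalyticAt ℂ R (g x, f x))
    (hg : ContDiffAt ℝ k g x) (hf : ContDiffAt ℝ k f x)
    (hfX : ∀ᶠ p in 𝓝 x, ∀ j, derivAlong (X j) f p = 0) (hw : w.length ≤ k)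
    (hRgf : ∀ᶠ p in 𝓝 x, R (g p, f p) = 0) :
    ∀ᶠ p in 𝓝 x, prolong R w (jet X w g p, f p) = 0 := by
  filter_upwards [wordDeriv_comp_eq_prolong hX hR hg hf hfX hw,
    eventuallyEq_wordDeriv (X := X) (w := w) hRgf] with p hp hzero
  rw [← hp, hzero, wordDeriv_zero]

lemma fderiv_prolong_jet_inr [CompleteSpace F] (hX : ∀ m < k, ∀ j, ContDiffAt ℝ m (X j) x)
    (hR : AnalyticAt ℂ R (g x, f x)) (hg : ContDiffAt ℝ k g x) (hf : ContDiffAt ℝ k f x)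
    (hfX : ∀ᶠ p in 𝓝 x, ∀ j, derivAlong (X j) f p = 0) (hw : w.length ≤ k) (ξ : V) :
    fderiv ℂ (prolong R w) (jet X w g x, f x) (0, ξ) =
      wordDeriv X w (fun p => fderiv ℂ R (g p, f p) (0, ξ)) x := by
  have hR' : AnalyticAt ℂ (fun y => fderiv ℂ R y (0, ξ)) (g x, f x) :=
    analyticAt_clm_apply hR.fderiv analyticAt_const
  rw [fderiv_prolong_inr hR]
  exact (wordDeriv_comp_eq_prolong hX hR' hg hf hfX hw).self_of_nhds.symm

end Prolongation

section Reflection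

variable {E V W Y G ι κ : Type*} [NormedAddCommGroup E] [NormedSpace ℝ E]
  [NormedAddCommGroup V] [NormedSpace ℂ V] [FiniteDimensional ℂ V]
  [NormedAddCommGroup W] [NormedSpace ℂ W]
  [NormedAddCommGroup Y] [NormedSpace ℂ Y] [CompleteSpace Y]
  [NormedAddCommGroup G] [NormedSpace ℂ G] [FiniteDimensional ℂ G]

/-- Composing `F` with a left inverse of its partial derivative discards the superfluous equations
and makes the implicit function theorem applicable. -/
lemma exists_holomorphic_implicit_of_injective {F : Y × V → G} {y : Y} {a : V}
    (hF : ContDiffAt ℂ 1 F (y, a)) (hF0 : F (y, a) = 0)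
    (hinj : ∀ ξ, fderiv ℂ F (y, a) (0, ξ) = 0 → ξ = 0) :
    ∃ (U : Set Y) (Υ : Y → V), IsOpen U ∧ y ∈ U ∧ DifferentiableOn ℂ Υ U ∧
      ∀ᶠ q in 𝓝 (y, a), F q = 0 → q.2 = Υ q.1 := by
  have := FiniteDimensional.complete ℂ V
  obtain ⟨S, hS⟩ := LinearMap.exists_leftInverse_of_injective
    ((fderiv ℂ F (y, a)).comp (.inr ℂ Y V)).toLinearMap
    (LinearMap.ker_eq_bot'.2 fun ξ hξ => hinj ξ hξ)
  let T : G →L[ℂ] V := S.toContinuousLinearMap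
  have hTF : ContDiffAt ℂ 1 (T ∘ F) (y, a) := T.contDiff.contDiffAt.comp _ hF
  have hpartial : (fderiv ℂ (T ∘ F) (y, a)).comp (.inr ℂ Y V) = .id ℂ V := by
    ext ξ
    rw [fderiv_comp _ T.differentiableAt (hF.differentiableAt one_ne_zero), T.fderiv]
    exact LinearMap.congr_fun hS ξ
  have hinv : ((fderiv ℂ (T ∘ F) (y, a)).comp (.inr ℂ Y V)).IsInvertible :=
    ⟨.refl ℂ V, hpartial.symm⟩
  obtain ⟨U, hUdiff, hU, hyU⟩ := eventually_nhds_iff.1 <|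
    (hTF.contDiffAt_implicitFunction one_ne_zero hinv).eventually (by simp)
  refine ⟨U, hTF.implicitFunction one_ne_zero hinv, hU, hyU,
    fun z hz => ((hUdiff z hz).differentiableAt one_ne_zero).differentiableWithinAt, ?_⟩
  filter_upwards [hTF.eventually_apply_eq_iff_implicitFunction one_ne_zero hinv] with q hq hFq
  exact (hq.1 (by simp [hFq, hF0])).symm

variable {X : ι → E → E × E} {f : E → V} {g : E → W} {x : E} {k : ℕ}

/-- An abstract reflection principle. The jets of `g` along different words overlap, so they are
read off by linear maps `T i` from a common map `J`. -/
theorem exists_holomorphic_of_nondegenerate [Finite κ] {word : κ → List ι} {R : κ → W × V → G}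
    {J : E → Y} (hX : ∀ m < k, ∀ j, ContDiffAt ℝ m (X j) x) (hf : ContDiffAt ℝ k f x)
    (hg : ContDiffAt ℝ k g x) (hfX : ∀ᶠ p in 𝓝 x, ∀ j, derivAlong (X j) f p = 0)
    (hword : ∀ i, (word i).length ≤ k) (hR : ∀ i, AnalyticAt ℂ (R i) (g x, f x))
    (hRfg : ∀ i, ∀ᶠ p in 𝓝 x, R i (g p, f p) = 0) (hJ : ContinuousAt J x)
    (T : ∀ i, Y →L[ℂ] (Subword (word i) → W))
    (hT : ∀ i, ∀ᶠ p in 𝓝 x, T i (J p) = jet X (word i) g p)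
    (hnd : ∀ ξ, (∀ i, wordDeriv X (word i) (fun p => fderiv ℂ (R i) (g p, f p) (0, ξ)) x = 0) →
      ξ = 0) :
    ∃ (U : Set Y) (Υ : Y → V), IsOpen U ∧ J x ∈ U ∧ DifferentiableOn ℂ Υ U ∧
      ∀ᶠ p in 𝓝 x, f p = Υ (J p) := by
  have := FiniteDimensional.complete ℂ G
  have := Fintype.ofFinite κ
  let F : Y × V → κ → G := fun q i => prolong (R i) (word i) (T i q.1, q.2)
  have hTx (i : κ) : T i (J x) = jet X (word i) g x := (hT i).self_of_nhds
  have hprolong (i : κ) : AnalyticAt ℂ (prolong (R i) (word i)) (T i (J x), f x) := by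
    rw [hTx]
    exact analyticAt_prolong (hR i)
  have hF (i : κ) : AnalyticAt ℂ (fun q => F q i) (J x, f x) :=
    (hprolong i).comp_of_eq (((T i).prodMap (.id ℂ V)).analyticAt _) rfl
  have hFJ : ∀ᶠ p in 𝓝 x, F (J p, f p) = 0 := by
    filter_upwards [eventually_all.2 hT, eventually_all.2 fun i =>
      eventually_prolong_jet_eq_zero hX (hR i) hg hf hfX (hword i) (hRfg i)] with p hTp hp
    ext1 i
    simp only [F, hTp i, hp i, Pi.zero_apply]
  have hderiv (ξ : V) (i : κ) : fderiv ℂ F (J x, f x) (0, ξ) i =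
      wordDeriv X (word i) (fun p => fderiv ℂ (R i) (g p, f p) (0, ξ)) x := by
    have hcomp := HasFDerivAt.comp (J x, f x) (hprolong i).differentiableAt.hasFDerivAt
      ((T i).prodMap (.id ℂ V)).hasFDerivAt
    rw [fderiv_pi fun i => (hF i).differentiableAt,
      ← fderiv_prolong_jet_inr hX (hR i) hg hf hfX (hword i) ξ, ← hTx]
    exact congr($hcomp.fderiv (0, ξ)).trans (by simp)
  obtain ⟨U, Υ, hU, hJU, hΥ, hsolve⟩ := exists_holomorphic_implicit_of_injective
    (contDiffAt_pi.2 fun i => (hF i).contDiffAt)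
    hFJ.self_of_nhds fun ξ hξ => hnd ξ fun i => by rw [← hderiv, hξ, Pi.zero_apply]
  refine ⟨U, Υ, hU, hJU, hΥ, ?_⟩
  filter_upwards [(hJ.prodMk hf.continuousAt).eventually hsolve, hFJ] with p hp hFp using hp hFp

end Reflection

section MultiIndices

variable {n : ℕ}

/-- The word in which each letter `j` occurs `β j` times, in increasing order of the letters, so
that the corresponding iterated derivative is `X₁^{β₁} ⋯ Xₙ^{βₙ}`. -/
def orderedWord (β : Fin n → ℕ) : List (Fin n) :=
  (List.finRange n).flatMap fun j => List.replicate (β j) j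

lemma length_orderedWord (β : Fin n → ℕ) : (orderedWord β).length = ∑ j, β j := by
  simp [orderedWord, List.length_flatMap, Fin.sum_univ_def]

lemma exists_eq_flatMap_replicate_of_sublist {α : Type*} (β : α → ℕ)
    {L u : List α} (hL : L.Nodup) (hu : u.Sublist (L.flatMap fun j => List.replicate (β j) j)) :
    ∃ γ : α → ℕ, u = L.flatMap fun j => List.replicate (γ j) j := by
  classical
  induction L generalizing u with
  | nil => exact ⟨0, by simpa using hu⟩
  | cons a L ih =>
    rw [List.flatMap_cons, List.sublist_append_iff] at hu
    obtain ⟨ua, uL, rfl, hua, huL⟩ := hu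
    obtain ⟨haL, hL⟩ := List.nodup_cons.1 hL
    obtain ⟨γ, rfl⟩ := ih hL huL
    obtain ⟨k, -, rfl⟩ := List.sublist_replicate_iff.1 hua
    refine ⟨Function.update γ a k, ?_⟩
    rw [List.flatMap_cons, Function.update_self]
    congr 1
    refine List.flatMap_congr fun j hj => ?_
    rw [Function.update_of_ne (by rintro rfl; exact haL hj)]

lemma exists_eq_orderedWord_of_sublist {β : Fin n → ℕ} {u : List (Fin n)}
    (hu : u.Sublist (orderedWord β)) : ∃ γ : Fin n → ℕ, u = orderedWord γ :=
  exists_eq_flatMap_replicate_of_sublist β (List.nodup_finRange n) hu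

lemma finite_setOf_sum_le {α : Type*} [Fintype α] (k : ℕ) : {β : α → ℕ | ∑ j, β j ≤ k}.Finite :=
  (Set.Finite.pi' fun _ => Set.finite_Iic k).subset fun _ hβ j =>
    (Finset.single_le_sum_of_canonicallyOrdered (Finset.mem_univ j)).trans (Set.mem_ofPred.1 hβ)

end MultiIndices

section Smoothness

variable {E κ : Type*} [NormedAddCommGroup E] [Fintype κ]

lemma contDiffAt_ofReal_comp [NormedSpace ℝ E] {f : E → ℝ} {x : E} {m : WithTop ℕ∞}
    (hf : ContDiffAt ℝ m f x) : ContDiffAt ℝ m (fun p => (f p : ℂ)) x :=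
  ofRealCLM.contDiff.contDiffAt.comp x hf

lemma contDiffAt_pi_star_comp [NormedSpace ℝ E] {f : E → κ → ℂ} {x : E} {m : WithTop ℕ∞}
    (hf : ContDiffAt ℝ m f x) : ContDiffAt ℝ m (fun p => star (f p)) x :=
  (starL' ℝ : (κ → ℂ) ≃L[ℝ] (κ → ℂ)).contDiff.contDiffAt.comp x hf

variable [DecidableEq κ]

lemma contDiffAt_det {𝕜 R : Type*} [NontriviallyNormedField 𝕜] [NormedSpace 𝕜 E]
    [NormedCommRing R] [NormedAlgebra 𝕜 R] {A : E → Matrix κ κ R} {x : E} {m : WithTop ℕ∞}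
    (hA : ∀ a b, ContDiffAt 𝕜 m (fun p => A p a b) x) :
    ContDiffAt 𝕜 m (fun p => (A p).det) x := by
  simp only [Matrix.det_apply']
  exact ContDiffAt.sum fun σ _ => contDiffAt_const.mul (contDiffAt_prod fun i _ => hA _ _)

lemma contDiffAt_matrix_inv_apply {𝕜 R : Type*} [NontriviallyNormedField 𝕜] [NormedSpace 𝕜 E]
    [NormedField R] [NormedAlgebra 𝕜 R] {A : E → Matrix κ κ R} {x : E} {m : WithTop ℕ∞}
    (hA : ∀ a b, ContDiffAt 𝕜 m (fun p => A p a b) x) (hdet : (A x).det ≠ 0) (a b : κ) :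
    ContDiffAt 𝕜 m (fun p => (A p)⁻¹ a b) x := by
  have hadj : ContDiffAt 𝕜 m (fun p => (A p).adjugate a b) x := by
    simp only [Matrix.adjugate_apply]
    refine contDiffAt_det fun c e => ?_
    by_cases hc : c = b
    · simpa [hc] using contDiffAt_const
    · simpa [hc] using hA c e
  simp only [Matrix.inv_def, Ring.inverse_eq_inv', Matrix.smul_apply, smul_eq_mul]
  exact ((contDiffAt_det hA).inv hdet).mul hadj

end Smoothness

section CRFields

variable {n d : ℕ} {φ : Dom n d → Fin d → ℝ} {p : Dom n d} {m : ℕ}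

/-- The coefficients of `(φ_{z̄ⱼ})ᵀ (I_d + iφ_s)⁻¹`. -/
def crCoeff (φ : Dom n d → Fin d → ℝ) (j : Fin n) (p : Dom n d) (l : Fin d) : ℂ :=
  ∑ k, dzbar j (fun q => ((φ q k : ℝ) : ℂ)) p * (phiMat φ p)⁻¹ k l

/-- The CR vector field `Λⱼ = ½(∂/∂xⱼ + i ∂/∂yⱼ) − i ∑ₗ cₗ ∂/∂sₗ`, with `c = crCoeff φ j`, as the
pair of its real and imaginary parts. -/
def crField (φ : Dom n d → Fin d → ℝ) (j : Fin n) (p : Dom n d) : Dom n d × Dom n d :=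
  (((1 / 2 : ℝ) • Pi.single j 1, fun l => (crCoeff φ j p l).im),
    ((1 / 2 : ℝ) • Pi.single j I, fun l => -(crCoeff φ j p l).re))

lemma Lambda_eq_derivAlong (φ : Dom n d → Fin d → ℝ) (j : Fin n) (f : Dom n d → ℂ) :
    Lambda φ j f = derivAlong (crField φ j) f := by
  funext p
  have hfderiv (z : ℂ) (v : Fin d → ℝ) : fderiv ℝ f p ((1 / 2 : ℝ) • Pi.single j z, v) =
      1 / 2 * fderiv ℝ f p (Pi.single j z, 0) + ∑ l, v l * dS l f p := by
    have hv : (((1 / 2 : ℝ) • Pi.single j z, v) : Dom n d) =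
        (1 / 2 : ℝ) • (Pi.single j z, 0) + ∑ l, v l • (0, Pi.single l 1) := by
      ext <;> simp [Prod.fst_sum, Prod.snd_sum, Finset.sum_apply, Pi.single_apply]
    rw [hv, map_add, map_smul, map_sum]
    simp only [map_smul, real_smul, dS, ofReal_div, ofReal_one, ofReal_ofNat]
  have hcoeff : ∑ l, crCoeff φ j p l * dS l f p =
      ∑ l, (crCoeff φ j p l).re * dS l f p + I * ∑ l, (crCoeff φ j p l).im * dS l f p := by
    rw [Finset.mul_sum, ← Finset.sum_add_distrib]
    refine Finset.sum_congr rfl fun l _ => ?_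
    linear_combination -(dS l f p) * re_add_im (crCoeff φ j p l)
  have hLambda : Lambda φ j f p = dzbar j f p - I * ∑ l, crCoeff φ j p l * dS l f p := rfl
  rw [hLambda, hcoeff, derivAlong, crField, hfderiv, hfderiv, dzbar, smul_eq_mul]
  simp only [ofReal_neg, neg_mul, Finset.sum_neg_distrib]
  linear_combination -(∑ l, (crCoeff φ j p l).im * dS l f p) * I_mul_I

lemma contDiffAt_phiMat (hφ : ContDiffAt ℝ (m + 1) φ p) (k l : Fin d) :
    ContDiffAt ℝ m (fun q => phiMat φ q k l) p := by
  have hfderiv := (hφ.fderiv_right (m := m) le_rfl).clm_apply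
    (contDiffAt_const (c := ((0, Pi.single l 1) : Dom n d)))
  exact contDiffAt_const.add
    (contDiffAt_const.mul (contDiffAt_ofReal_comp (contDiffAt_pi.1 hfderiv k)))

lemma contDiffAt_dzbar {f : Dom n d → ℂ} (hf : ContDiffAt ℝ (m + 1) f p) (j : Fin n) :
    ContDiffAt ℝ m (dzbar j f) p := by
  have hfderiv := hf.fderiv_right (m := m) le_rfl
  exact contDiffAt_const.mul ((hfderiv.clm_apply contDiffAt_const).add
    (contDiffAt_const.mul (hfderiv.clm_apply contDiffAt_const)))

lemma contDiffAt_crField (hφ : ContDiffAt ℝ (m + 1) φ p) (hdet : (phiMat φ p).det ≠ 0)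
    (j : Fin n) : ContDiffAt ℝ m (crField φ j) p := by
  have hcoeff (l : Fin d) : ContDiffAt ℝ m (fun q => crCoeff φ j q l) p :=
    ContDiffAt.sum fun k _ =>
      (contDiffAt_dzbar (contDiffAt_ofReal_comp (m := m + 1) (contDiffAt_pi.1 hφ k)) j).mul
        (contDiffAt_matrix_inv_apply (contDiffAt_phiMat hφ) hdet k l)
  have him : ContDiffAt ℝ m (fun q l => (crCoeff φ j q l).im) p :=
    contDiffAt_pi.2 fun l => imCLM.contDiff.contDiffAt.comp p (hcoeff l)
  have hre : ContDiffAt ℝ m (fun q l => (crCoeff φ j q l).re) p :=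
    contDiffAt_pi.2 fun l => reCLM.contDiff.contDiffAt.comp p (hcoeff l)
  exact (contDiffAt_const.prodMk him).prodMk (contDiffAt_const.prodMk hre.neg)

lemma LambdaPow_eq_wordDeriv (φ : Dom n d → Fin d → ℝ) (α : Fin n → ℕ) (f : Dom n d → ℂ) :
    LambdaPow φ α f = wordDeriv (crField φ) (orderedWord α) f := by
  have hword : wordDeriv (crField φ) (orderedWord α) f = (orderedWord α).foldr (Lambda φ) f := by
    rw [show Lambda φ = fun j => derivAlong (crField φ j) from funext₂ (Lambda_eq_derivAlong φ)]
    rfl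
  have hreplicate (j : Fin n) (k : ℕ) (g : Dom n d → ℂ) :
      (List.replicate k j).foldr (Lambda φ) g = (Lambda φ j)^[k] g := by
    induction k with
    | zero => rfl
    | succ k ih => rw [Function.iterate_succ_apply', ← ih, List.replicate_succ, List.foldr_cons]
  rw [hword, LambdaPow, orderedWord]
  induction List.finRange n with
  | nil => rfl
  | cons j L ih =>
    rw [List.map_cons, List.foldr_cons, Function.comp_apply, ih, List.flatMap_cons,
      List.foldr_append, hreplicate]

end CRFields

section CRMaps

variable {n d N' d' k₀ : ℕ} {K : Type*} {φ : Dom n d → Fin d → ℝ} {H : Dom n d → Fin N' → ℂ}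

lemma det_phiMat_ne_zero {p : Dom n d} (hφ : fderiv ℝ φ p = 0) : (phiMat φ p).det ≠ 0 := by
  have hone : phiMat φ p = 1 := by
    ext k l
    simp [phiMat, hφ, Matrix.one_apply]
  simp [hone]

lemma exists_polarization_gradZ {r : (Fin N' → ℂ) → ℝ} {a : Fin N' → ℂ}
    (hr : AnalyticAt ℝ r a) :
    ∃ R : (Fin N' → ℂ) × (Fin N' → ℂ) → ℂ, AnalyticAt ℂ R (star a, a) ∧
      ∀ᶠ Z in 𝓝 a, R (star Z, Z) = r Z ∧
        ∀ m, gradZ m r Z = fderiv ℂ R (star Z, Z) (0, Pi.single m 1) := by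
  obtain ⟨R, hR, hRr⟩ := exists_polarization (r := fun Z => (r Z : ℂ))
    ((ofRealCLM.analyticAt (r a)).comp hr)
  have hstar : Tendsto (fun Z : Fin N' → ℂ => (star Z, Z)) (𝓝 a) (𝓝 (star a, a)) :=
    (continuous_star.prodMk continuous_id).tendsto a
  refine ⟨R, hR, ?_⟩
  filter_upwards [hRr.eventually_nhds, hstar.eventually hR.eventually_analyticAt,
    hr.eventually_analyticAt] with Z hZ hRan hran
  refine ⟨hZ.self_of_nhds, fun m => ?_⟩
  have hfderiv (v : Fin N' → ℂ) : fderiv ℝ (fun Y => (r Y : ℂ)) Z v = fderiv ℝ r Z v :=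
    DFunLike.congr_fun (ofRealCLM.hasFDerivAt.comp Z hran.differentiableAt.hasFDerivAt).fderiv v
  rw [← wirtinger_eq_fderiv_polarization hRan.differentiableAt hZ, hfderiv, hfderiv,
    ← Pi.single_smul, smul_eq_mul, smul_eq_mul, smul_eq_mul, mul_one, gradZ]

/-- The map `p ↦ (H̄(p), (Λ^β H̄(p))_β)`, where `β` runs through the family `e`. -/
def conjJet (φ : Dom n d → Fin d → ℝ) (e : K → Fin n → ℕ) (H : Dom n d → Fin N' → ℂ)
    (p : Dom n d) : (Fin N' → ℂ) × (K → Fin N' → ℂ) :=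
  (fun m => starRingEnd ℂ (H p m), fun i m => LambdaPow φ (e i) (fun q => starRingEnd ℂ (H q m)) p)

lemma continuousAt_conjJet {e : K → Fin n → ℕ} {x : Dom n d}
    (hX : ∀ m < k₀, ∀ j, ContDiffAt ℝ m (crField φ j) x) (hH : ContDiffAt ℝ k₀ H x)
    (he : ∀ i, ∑ j, e i j ≤ k₀) : ContinuousAt (conjJet φ e H) x := by
  refine (hH.continuousAt.star).prodMk (continuousAt_pi.2 fun i => continuousAt_pi.2 fun m => ?_)
  have hHm : ContDiffAt ℝ k₀ (fun q => starRingEnd ℂ (H q m)) x :=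
    conjCLE.contDiff.contDiffAt.comp x (contDiffAt_pi.1 hH m)
  simp only [LambdaPow_eq_wordDeriv]
  refine (contDiffAt_wordDeriv hX hHm (l := 0) ?_).continuousAt
  rw [zero_add, length_orderedWord]
  exact he i

lemma exists_clm_conjJet_eq_wordDeriv {e : K → Fin n → ℕ} {x : Dom n d}
    (hX : ∀ m < k₀, ∀ j, ContDiffAt ℝ m (crField φ j) x) (hH : ContDiffAt ℝ k₀ H x)
    (he : ∀ β : Fin n → ℕ, 1 ≤ ∑ j, β j → ∑ j, β j ≤ k₀ → ∃ i, e i = β)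
    {γ : Fin n → ℕ} (hγ : ∑ j, γ j ≤ k₀) :
    ∃ T : (Fin N' → ℂ) × (K → Fin N' → ℂ) →L[ℂ] (Fin N' → ℂ), ∀ᶠ p in 𝓝 x,
      T (conjJet φ e H p) = wordDeriv (crField φ) (orderedWord γ) (fun q => star (H q)) p := by
  rcases Nat.eq_zero_or_pos (∑ j, γ j) with hγ0 | hγpos
  · rw [← length_orderedWord, List.length_eq_zero_iff] at hγ0
    exact ⟨.fst ℂ _ _, .of_forall fun p => by rw [hγ0]; rfl⟩
  · obtain ⟨i, rfl⟩ := he γ hγpos hγ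
    refine ⟨(ContinuousLinearMap.proj i).comp (.snd ℂ _ _), ?_⟩
    have hcomponent (m : Fin N') := wordDeriv_clm_comp hX (contDiffAt_pi_star_comp hH)
      ((length_orderedWord (e i)).trans_le hγ) (.proj m : (Fin N' → ℂ) →L[ℂ] ℂ)
    filter_upwards [eventually_all.2 hcomponent] with p hp
    ext1 m
    exact (congr_fun (LambdaPow_eq_wordDeriv φ (e i) _) p).trans (hp m)

lemma exists_clm_conjJet_eq_jet {e : K → Fin n → ℕ} {x : Dom n d}
    (hX : ∀ m < k₀, ∀ j, ContDiffAt ℝ m (crField φ j) x) (hH : ContDiffAt ℝ k₀ H x)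
    (he : ∀ β : Fin n → ℕ, 1 ≤ ∑ j, β j → ∑ j, β j ≤ k₀ → ∃ i, e i = β)
    {α : Fin n → ℕ} (hα : ∑ j, α j ≤ k₀) :
    ∃ T : (Fin N' → ℂ) × (K → Fin N' → ℂ) →L[ℂ] (Subword (orderedWord α) → Fin N' → ℂ),
      ∀ᶠ p in 𝓝 x,
        T (conjJet φ e H p) = jet (crField φ) (orderedWord α) (fun q => star (H q)) p := by
  have hsubword (u : Subword (orderedWord α)) :
      ∃ T : (Fin N' → ℂ) × (K → Fin N' → ℂ) →L[ℂ] (Fin N' → ℂ), ∀ᶠ p in 𝓝 x,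
        T (conjJet φ e H p) = wordDeriv (crField φ) u (fun q => star (H q)) p := by
    obtain ⟨γ, hγ⟩ := exists_eq_orderedWord_of_sublist u.2
    rw [hγ]
    refine exists_clm_conjJet_eq_wordDeriv hX hH he ?_
    rw [← length_orderedWord, ← hγ]
    exact u.2.length_le.trans ((length_orderedWord α).trans_le hα)
  choose T hT using hsubword
  exact ⟨.pi T, (eventually_all.2 hT).mono fun p hp => funext hp⟩

lemma dotProduct_LambdaPow_gradZ {r : (Fin N' → ℂ) → ℝ} {R : (Fin N' → ℂ) × (Fin N' → ℂ) → ℂ}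
    {x : Dom n d} (hX : ∀ m < k₀, ∀ j, ContDiffAt ℝ m (crField φ j) x)
    (hH : ContDiffAt ℝ k₀ H x)
    (hHX : ∀ᶠ p in 𝓝 x, ∀ j, derivAlong (crField φ j) H p = 0)
    (hR : AnalyticAt ℂ R (star (H x), H x))
    (hRr : ∀ᶠ p in 𝓝 x, ∀ m, gradZ m r (H p) = fderiv ℂ R (star (H p), H p) (0, Pi.single m 1))
    {α : Fin n → ℕ} (hα : ∑ j, α j ≤ k₀) (ξ : Fin N' → ℂ) :
    ξ ⬝ᵥ (fun m => LambdaPow φ α (fun p => gradZ m r (H p)) x) =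
      wordDeriv (crField φ) (orderedWord α)
        (fun p => fderiv ℂ R (star (H p), H p) (0, ξ)) x := by
  have hprolong := fderiv_prolong_jet_inr hX hR (contDiffAt_pi_star_comp hH) hH hHX
    ((length_orderedWord α).trans_le hα)
  have hgradZ (m : Fin N') : LambdaPow φ α (fun p => gradZ m r (H p)) x =
      fderiv ℂ (prolong R (orderedWord α)) (jet (crField φ) _ (fun q => star (H q)) x, H x)
        (0, Pi.single m 1) := by
    rw [LambdaPow_eq_wordDeriv, hprolong]
    exact (eventuallyEq_wordDeriv (hRr.mono fun p hp => hp m)).self_of_nhds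
  have hξ : ((0, ξ) : (Subword (orderedWord α) → Fin N' → ℂ) × (Fin N' → ℂ)) =
      ∑ m, ξ m • (0, Pi.single m 1) := by
    ext <;> simp [Prod.fst_sum, Prod.snd_sum, Finset.sum_apply, Pi.single_apply]
  rw [← hprolong, hξ, map_sum]
  simp only [dotProduct, hgradZ, map_smul, smul_eq_mul]

lemma eq_zero_of_forall_dotProduct_eq_zero {ι : Type*} [Fintype ι] {s : Set (ι → ℂ)}
    (hs : Submodule.span ℂ s = ⊤) {ξ : ι → ℂ} (hξ : ∀ v ∈ s, ξ ⬝ᵥ v = 0) : ξ = 0 := by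
  have hker : dotProductBilin ℂ ℂ ξ = 0 := LinearMap.ext_on hs hξ
  exact dotProduct_eq_zero ξ fun v => DFunLike.congr_fun hker v

theorem exists_holomorphic_conjJet_of_Ek_eq_top [Finite K] {ρ : Fin d' → (Fin N' → ℂ) → ℝ}
    {e : K → Fin n → ℕ} (hφ : ContDiffAt ℝ k₀ φ 0) (hdet : (phiMat φ 0).det ≠ 0)
    (hρ : ∀ l, AnalyticAt ℝ (ρ l) (H 0)) (hH : ContDiffAt ℝ k₀ H 0)
    (hHCR : ∀ᶠ p in 𝓝 0, ∀ j m, Lambda φ j (fun q => H q m) p = 0)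
    (hHM' : ∀ᶠ p in 𝓝 0, ∀ l, ρ l (H p) = 0) (hnd : Ek φ ρ H k₀ = ⊤)
    (hle : ∀ i, ∑ j, e i j ≤ k₀)
    (he : ∀ β : Fin n → ℕ, 1 ≤ ∑ j, β j → ∑ j, β j ≤ k₀ → ∃ i, e i = β) :
    ∃ (V : Set ((Fin N' → ℂ) × (K → Fin N' → ℂ)))
      (Υ : (Fin N' → ℂ) × (K → Fin N' → ℂ) → Fin N' → ℂ),
      IsOpen V ∧ conjJet φ e H 0 ∈ V ∧ DifferentiableOn ℂ Υ V ∧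
      ∀ᶠ p in 𝓝 0, H p = Υ (conjJet φ e H p) := by
  have := Fintype.ofFinite K
  have hX (m : ℕ) (hm : m < k₀) (j : Fin n) : ContDiffAt ℝ m (crField φ j) 0 :=
    contDiffAt_crField (hφ.of_le (mod_cast hm)) hdet j
  have hHX : ∀ᶠ p in 𝓝 0, ∀ j, derivAlong (crField φ j) H p = 0 :=
    hHCR.mono fun p hp j => derivAlong_eq_zero_of_pi fun m => by
      rw [← Lambda_eq_derivAlong, hp j m]
  choose R hR hRρ using fun l => exists_polarization_gradZ (hρ l)
  have hRH (l : Fin d') := hH.continuousAt.eventually (hRρ l)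
  let κ := {α : Fin n → ℕ // ∑ j, α j ≤ k₀} × Fin d'
  have : Finite {α : Fin n → ℕ // ∑ j, α j ≤ k₀} := (finite_setOf_sum_le k₀).to_subtype
  choose T hT using fun α : {α : Fin n → ℕ // ∑ j, α j ≤ k₀} =>
    exists_clm_conjJet_eq_jet hX hH he α.2
  refine exists_holomorphic_of_nondegenerate (κ := κ) (word := fun i => orderedWord i.1.1)
    (R := fun i => R i.2) hX hH (contDiffAt_pi_star_comp hH) hHX
    (fun i => (length_orderedWord _).trans_le i.1.2) (fun i => hR i.2) (fun i => ?_)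
    (continuousAt_conjJet hX hH hle) (fun i => T i.1) (fun i => hT i.1) fun ξ hξ => ?_
  · filter_upwards [hRH i.2, hHM'] with p hRp hp
    rw [hRp.1, hp, ofReal_zero]
  · refine eq_zero_of_forall_dotProduct_eq_zero hnd ?_
    rintro _ ⟨α, l, hα, rfl⟩
    rw [dotProduct_LambdaPow_gradZ hX hH hHX (hR l) ((hRH l).mono fun _ h => h.2) hα]
    exact hξ (⟨α, hα⟩, l)

end CRMaps

theorem exists_Upsilon_general {n d N' d' k₀ : ℕ} (φ : Dom n d → Fin d → ℝ)
    (hφ : ContDiffAt ℝ k₀ φ 0) (hdet : (phiMat φ 0).det ≠ 0)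
    (ρ : Fin d' → (Fin N' → ℂ) → ℝ) (H : Dom n d → Fin N' → ℂ)
    (hρ : ∀ l, AnalyticAt ℝ (ρ l) (H 0)) (hH : ContDiffAt ℝ k₀ H 0)
    (hHCR : ∀ᶠ p in 𝓝 0, ∀ j m, Lambda φ j (fun q => H q m) p = 0)
    (hHM' : ∀ᶠ p in 𝓝 0, ∀ l, ρ l (H p) = 0) (hnd : Ek φ ρ H k₀ = ⊤) :
    ∃ (K : ℕ) (e : Fin K → Fin n → ℕ),
      Function.Injective e ∧ (∀ i, 1 ≤ ∑ j, e i j ∧ ∑ j, e i j ≤ k₀) ∧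
      (∀ β : Fin n → ℕ, 1 ≤ ∑ j, β j → ∑ j, β j ≤ k₀ → ∃ i, e i = β) ∧
      ∃ (V : Set ((Fin N' → ℂ) × (Fin K → Fin N' → ℂ)))
        (Υ : (Fin N' → ℂ) × (Fin K → Fin N' → ℂ) → Fin N' → ℂ),
        IsOpen V ∧ conjJet φ e H 0 ∈ V ∧ DifferentiableOn ℂ Υ V ∧
        ∀ᶠ p in 𝓝 0, H p = Υ (conjJet φ e H p) := by
  have hfinite : {β : Fin n → ℕ | 1 ≤ ∑ j, β j ∧ ∑ j, β j ≤ k₀}.Finite :=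
    (finite_setOf_sum_le k₀).subset fun _ h => h.2
  obtain ⟨K, e, he_inj, he_range⟩ := hfinite.fin_param
  have he_mem (i : Fin K) : 1 ≤ ∑ j, e i j ∧ ∑ j, e i j ≤ k₀ := he_range.subset ⟨i, rfl⟩
  have he_surj (β : Fin n → ℕ) (h1 : 1 ≤ ∑ j, β j) (hk : ∑ j, β j ≤ k₀) : ∃ i, e i = β :=
    he_range.superset ⟨h1, hk⟩
  exact ⟨K, e, he_inj, he_mem, he_surj, exists_holomorphic_conjJet_of_Ek_eq_top hφ hdet hρ hH
    hHCR hHM' hnd (fun i => (he_mem i).2) he_surj⟩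

/-- for a `k₀`-nondegenerate CR map `H : M → M'` of class `C^{k₀}` there are
holomorphic functions `Υ₁,…,Υ_{N'}` near `(0, (Λ^β H̄(0))_{1≤|β|≤k₀})` such that
`Hⱼ = Υⱼ(H̄, (Λ^β H̄)_{1≤|β|≤k₀})` near `0` on `M`. -/
theorem exists_Upsilon {n d N' d' k₀ : ℕ} (hn : 1 ≤ n) (hd : 1 ≤ d) (hd' : 1 ≤ d')
    -- the source manifold M, in normal form
    (φ : Dom n d → Fin d → ℝ)
    (hφan : ∀ᶠ p in 𝓝 (0 : Dom n d), AnalyticAt ℝ φ p)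
    (hφ0 : φ 0 = 0) (hdφ0 : fderiv ℝ φ 0 = 0)
    -- the target manifold M', generic through 0
    (ρ : Fin d' → (Fin N' → ℂ) → ℝ)
    (hρan : ∀ l, ∀ᶠ Z in 𝓝 (0 : Fin N' → ℂ), AnalyticAt ℝ (ρ l) Z)
    (hρ0 : ∀ l, ρ l 0 = 0)
    (hρind : LinearIndependent ℂ fun l : Fin d' => fun m => gradZ m (ρ l) 0)
    -- the CR map H : M → M' of class C^{k₀}
    (H : Dom n d → Fin N' → ℂ) (U : Set (Dom n d)) (hU : IsOpen U) (h0U : (0 : Dom n d) ∈ U)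
    (hHsm : ContDiffOn ℝ k₀ H U) (hH0 : H 0 = 0)
    (hHCR : ∀ p ∈ U, ∀ j m, Lambda φ j (fun q => H q m) p = 0)
    (hHM' : ∀ p ∈ U, ∀ l, ρ l (H p) = 0)
    -- H is k₀-nondegenerate at 0
    (hnd_top : Ek φ ρ H k₀ = ⊤) (hnd_min : ∀ k < k₀, Ek φ ρ H k ≠ ⊤) :
    ∃ (K : ℕ) (e : Fin K → (Fin n → ℕ)),
      -- e enumerates {β : 1 ≤ |β| ≤ k₀}, so K is its cardinality
      Function.Injective e ∧
      (∀ i, 1 ≤ ∑ j, e i j ∧ ∑ j, e i j ≤ k₀) ∧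
      (∀ β : Fin n → ℕ, 1 ≤ ∑ j, β j → (∑ j, β j) ≤ k₀ → ∃ i, e i = β) ∧
      ∃ (V : Set ((Fin N' → ℂ) × (Fin K → Fin N' → ℂ)))
        (Υ : (Fin N' → ℂ) × (Fin K → Fin N' → ℂ) → Fin N' → ℂ),
        IsOpen V ∧
        -- V is a neighborhood of the point (0, (Λ^β H̄(0))_{1≤|β|≤k₀}) = (H̄(0), …)
        ((fun m => (starRingEnd ℂ) (H 0 m)),
          fun i m => LambdaPow φ (e i) (fun q => (starRingEnd ℂ) (H q m)) 0) ∈ V ∧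
        DifferentiableOn ℂ Υ V ∧
        ∀ᶠ p in 𝓝 (0 : Dom n d),
          H p = Υ ((fun m => (starRingEnd ℂ) (H p m)),
            fun i m => LambdaPow φ (e i) (fun q => (starRingEnd ℂ) (H q m)) p) := by
  have hU0 : U ∈ 𝓝 0 := hU.mem_nhds h0U
  exact exists_Upsilon_general φ hφan.self_of_nhds.contDiffAt (det_phiMat_ne_zero hdφ0) ρ H
    (fun l => hH0 ▸ (hρan l).self_of_nhds) (hHsm.contDiffAt hU0) (eventually_of_mem hU0 hHCR)
    (eventually_of_mem hU0 hHM') hnd_top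
end
end
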